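/- arXiv:0708.0400 — 2 statements merged into one kernel-verified Lean document; each statement's English description precedes it below -/
import Mathlib

section
/- (Lemma 1 of the paper) The commutator [Δ_F, Δ_{F,R}] of the odd Laplacian Δ_F = ((-1)^{ε_A}/2)(∂_A + F_A)E^{AB}∂_B and the even Laplacian Δ_{F,R} = ((-1)^{ε_A}/2)(∂_A + F_A)R^{AB}∂_B is always a differential operator of at most first order, where R^{AD} = E^{AB} R_{BC} E^{CD} (-1)^{ε_C} is the raised-index curvature of F. -/
/-!
The commutator is controlled by the square of the odd Laplacian. Write `X_h = (h, ·)` for the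
Hamiltonian vector field of a function `h`, `X^a = X_{x^a} = E^{ab} ∂_b`, and `Δ_1` for the Laplacian
of the trivial connection, so that `Δ_F = Δ_1 + V/2` with the vector field `V = (-1)^{ε_a} F_a X^a`.

* The Jacobi identity on coordinates says `[X^a, X^b] = X_{E^{ab}}`; hence `[X^a, X_h] = X_{(x^a,h)}`,
  and `Δ_1` is a derivation of the antibracket: `[Δ_1, X_h] = X_{Δ_1 h}` (`lapOne_ham_comm`).
  Since also `[Δ_1, h] = Δ_1 h ± X_h`, the square `Δ_1²` is a vector field (`lapOne_sq_isDer`).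
* Expanding `[Δ_1, V]` and `V²` with the same relations, the curvature terms assemble into
  `Δ_{F,R}` up to Hamiltonian vector fields (`lapOne_connField`, `connField_sq`). This gives
  `Δ_F² = Δ_1² + Δ_{F,R}/2 + X_ν` for an odd function `ν` (`lap_sq`).

Thus `Δ_{F,R} = 2 (Δ_F² - Y)` with the vector field `Y = Δ_1² + X_ν`. As `Δ_F` commutes with `Δ_F²`,
`[Δ_F, Δ_{F,R}] = -2 [Δ_F, Y] = -2 [Δ_1, X_ν] - [V, Y] = -2 X_{Δ_1 ν} - [V, Y]`, because `Δ_1`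
commutes with `Δ_1²`. This is a vector field, hence an operator of order at most one.
-/

open scoped BigOperators

noncomputable section

/-- The sign `(-1)^p` for a parity `p : ZMod 2`, valued in `ℚ`. -/
def sgn (p : ZMod 2) : ℚ := if p = 0 then 1 else -1

/-- A supercommutative algebra of "functions on a superdomain" with local coordinates
`coord i`, Grassmann parities `ε i`, and left partial derivatives `D i`. -/
structure SuperAlg (ι : Type) [Fintype ι] [DecidableEq ι]
    (A : Type) [Ring A] [Algebra ℚ A] where
  ε : ι → ZMod 2
  hom : ZMod 2 → Submodule ℚ A
  one_mem : (1 : A) ∈ hom 0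
  mul_mem : ∀ {p q : ZMod 2} {a b : A}, a ∈ hom p → b ∈ hom q → a * b ∈ hom (p + q)
  supercomm : ∀ {p q : ZMod 2} {a b : A}, a ∈ hom p → b ∈ hom q →
    a * b = sgn (p * q) • (b * a)
  D : ι → A →ₗ[ℚ] A
  D_mem : ∀ (i : ι) {p : ZMod 2} {a : A}, a ∈ hom p → D i a ∈ hom (p + ε i)
  D_leibniz : ∀ (i : ι) {p : ZMod 2} {a : A} (b : A), a ∈ hom p →
    D i (a * b) = D i a * b + sgn (ε i * p) • (a * D i b)
  D_comm : ∀ (i j : ι) (a : A), D i (D j a) = sgn (ε i * ε j) • D j (D i a)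
  coord : ι → A
  coord_mem : ∀ i, coord i ∈ hom (ε i)
  D_coord : ∀ i j, D i (coord j) = if i = j then (1 : A) else 0

namespace SuperAlg

variable {ι : Type} [Fintype ι] [DecidableEq ι]
variable {A : Type} [Ring A] [Algebra ℚ A]

/-- The operator of left multiplication by `f`. -/
def L (f : A) : A →ₗ[ℚ] A := LinearMap.mulLeft ℚ f

/-- The graded commutator `[T,U] = T∘U - (-1)^{pq} U∘T` of operators of parities `p`, `q`. -/
def gcomm (p q : ZMod 2) (T U : A →ₗ[ℚ] A) : A →ₗ[ℚ] A :=
  T ∘ₗ U - sgn (p * q) • (U ∘ₗ T)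

variable (S : SuperAlg ι A)

/-- The bracket `(f,g) = (f ∂⃖_A) M^{AB} (∂_B g)` built from the matrix `M`,
for `f` homogeneous of parity `pf`; the right derivative is expressed through
the left one via `f ∂⃖_A = (-1)^{ε_A (ε_f + 1)} ∂_A f`. -/
def brkt (M : ι → ι → A) (pf : ZMod 2) (f g : A) : A :=
  ∑ a, ∑ b, sgn (S.ε a * (pf + 1)) • (S.D a f * (M a b * S.D b g))

/-- The first-order operator `(x, ·)` (for Grassmann-odd `x`), built from the matrix `M`. -/
def Hop (M : ι → ι → A) (x : A) : A →ₗ[ℚ] A :=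
  ∑ a, ∑ b, L (S.D a x) ∘ₗ L (M a b) ∘ₗ S.D b

/-- The Laplacian `((-1)^{ε_A}/2)(∂_A + F_A) M^{AB} ∂_B`. -/
def lap (F : ι → A) (M : ι → ι → A) : A →ₗ[ℚ] A :=
  (1/2 : ℚ) • ∑ a, ∑ b, sgn (S.ε a) •
    ((S.D a ∘ₗ L (M a b) ∘ₗ S.D b) + (L (F a) ∘ₗ L (M a b) ∘ₗ S.D b))

/-- The curvature `R_{AB} = (∂_A F_B) - (-1)^{ε_A ε_B}(∂_B F_A)` of a line bundle
connection `F`. -/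
def curv (F : ι → A) (a b : ι) : A :=
  S.D a (F b) - sgn (S.ε a * S.ε b) • S.D b (F a)

/-- The raised-index curvature `R^{AD} = E^{AB} R_{BC} E^{CD} (-1)^{ε_C}`. -/
def curvUp (E : ι → ι → A) (F : ι → A) (a d : ι) : A :=
  ∑ b, ∑ c, sgn (S.ε c) • (E a b * (S.curv F b c * E c d))

/-- The graded Jacobi identity for the antibracket, on homogeneous functions. -/
def JacobiId (E : ι → ι → A) : Prop :=
  ∀ (pf pg ph : ZMod 2) (f g h : A),
    f ∈ S.hom pf → g ∈ S.hom pg → h ∈ S.hom ph →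
      sgn ((pf + 1) * (ph + 1)) • S.brkt E pf f (S.brkt E pg g h)
      + sgn ((pg + 1) * (pf + 1)) • S.brkt E pg g (S.brkt E ph h f)
      + sgn ((ph + 1) * (pg + 1)) • S.brkt E ph h (S.brkt E pf f g) = 0

/-- The closedness relation `Σ_{cycl. A,B,C} (-1)^{ε_A ε_C} (∂_A E_{BC}) = 0`
for the two-form with components `Einv`. -/
def ClosedId (Einv : ι → ι → A) : Prop :=
  ∀ a b c : ι,
    sgn (S.ε a * S.ε c) • S.D a (Einv b c)
    + sgn (S.ε b * S.ε a) • S.D b (Einv c a)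
    + sgn (S.ε c * S.ε b) • S.D c (Einv a b) = 0

/-- The Jacobi identity `Σ_{cycl. A,B,C} (-1)^{(ε_A+1)(ε_C+1)} E^{AD} (∂_D E^{BC}) = 0`
in terms of the matrix `E^{AB}`. -/
def EJacobiId (E : ι → ι → A) : Prop :=
  ∀ a b c : ι,
    ∑ d, (sgn ((S.ε a + 1) * (S.ε c + 1)) • (E a d * S.D d (E b c))
      + sgn ((S.ε b + 1) * (S.ε a + 1)) • (E b d * S.D d (E c a))
      + sgn ((S.ε c + 1) * (S.ε b + 1)) • (E c d * S.D d (E a b))) = 0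

/-- `E` is a non-degenerate graded-skewsymmetric (2,0)-tensor with inverse `Einv`. -/
structure AntiSymp (E Einv : ι → ι → A) : Prop where
  E_mem : ∀ a b, E a b ∈ S.hom (S.ε a + S.ε b + 1)
  E_skew : ∀ a b, E a b = - sgn ((S.ε a + 1) * (S.ε b + 1)) • E b a
  Einv_mem : ∀ a b, Einv a b ∈ S.hom (S.ε a + S.ε b + 1)
  Einv_skew : ∀ a b, Einv a b = - sgn (S.ε a * S.ε b) • Einv b a
  mul_inv : ∀ a c, ∑ b, E a b * Einv b c = if a = c then (1 : A) else 0
  inv_mul : ∀ a c, ∑ b, Einv a b * E b c = if a = c then (1 : A) else 0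

/-- An operator `T` of parity `pT` is of at most first order iff all its double graded
commutators with left multiplication operators vanish. -/
def IsFirstOrder (pT : ZMod 2) (T : A →ₗ[ℚ] A) : Prop :=
  ∀ (pf pg : ZMod 2) (f g : A), f ∈ S.hom pf → g ∈ S.hom pg →
    gcomm (pT + pf) pg (gcomm pT pf T (L f)) (L g) = 0

/-- The third-order terms of an operator `T` of parity `pT` vanish iff all its triple
graded commutators with left multiplication operators vanish. -/
def ThirdOrderVanish (pT : ZMod 2) (T : A →ₗ[ℚ] A) : Prop :=
  ∀ (pf pg ph : ZMod 2) (f g h : A),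
    f ∈ S.hom pf → g ∈ S.hom pg → h ∈ S.hom ph →
      gcomm (pT + pf + pg) ph
        (gcomm (pT + pf) pg (gcomm pT pf T (L f)) (L g)) (L h) = 0

/-- `ν_F^{(0)} = ((-1)^{ε_A}/4)(∂_A + F_A/2)(E^{AB} F_B)`. -/
def nuF0 (E : ι → ι → A) (F : ι → A) : A :=
  (1/4 : ℚ) • ∑ a, ∑ b, sgn (S.ε a) •
    (S.D a (E a b * F b) + (1/2 : ℚ) • (F a * (E a b * F b)))

/-- `ν^{(1)} = (-1)^{ε_A} (∂_B ∂_A E^{AB})`. -/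
def nu1 (E : ι → ι → A) : A :=
  ∑ a, ∑ b, sgn (S.ε a) • S.D b (S.D a (E a b))

/-- `ν^{(2)} = (-1)^{ε_A ε_C} (∂_D E^{AB}) E_{BC} (∂_A E^{CD})`. -/
def nu2 (E Einv : ι → ι → A) : A :=
  ∑ a, ∑ b, ∑ c, ∑ d, sgn (S.ε a * S.ε c) •
    (S.D d (E a b) * (Einv b c * S.D a (E c d)))

/-- `ν_F = ν_F^{(0)} + ν^{(1)}/8 - ν^{(2)}/24`. -/
def nuF (E Einv : ι → ι → A) (F : ι → A) : A :=
  S.nuF0 E F + (1/8 : ℚ) • S.nu1 E - (1/24 : ℚ) • S.nu2 E Einv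

/-- The divergence `div_1 X = (-1)^{ε_A} (∂_A X^A)`. -/
def div1 (X : ι → A) : A := ∑ a, sgn (S.ε a) • S.D a (X a)

/-- A form variation (infinitesimal coordinate transformation `δΓ^A = X^A`, compared
at the same argument): an even derivation commuting with the partial derivatives. -/
structure FormVar (X : ι → A) (δv : A →ₗ[ℚ] A) : Prop where
  deriv : ∀ a b : A, δv (a * b) = δv a * b + a * δv b
  commD : ∀ (i : ι) (a : A), δv (S.D i a) = S.D i (δv a)
  X_mem : ∀ i, X i ∈ S.hom (S.ε i)

/-- The form variation of a (2,0)-tensor `E^{AB}` under `δΓ^A = X^A`: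
`δE^{AB} = (X^A ∂⃖_C) E^{CB} + E^{AC}(∂_C X^B) - X^C (∂_C E^{AB})`. -/
def VarE (X : ι → A) (δv : A →ₗ[ℚ] A) (E : ι → ι → A) : Prop :=
  ∀ a b, δv (E a b) =
    (∑ c, sgn (S.ε c * (S.ε a + 1)) • (S.D c (X a) * E c b))
    + (∑ c, E a c * S.D c (X b))
    - ∑ c, X c * S.D c (E a b)

/-- The form variation of a line bundle connection `F_A` under `δΓ^A = X^A`:
`δF_A = -(∂_A X^B) F_B - ∂_A(div_1 X) - X^C (∂_C F_A)`. -/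
def VarF (X : ι → A) (δv : A →ₗ[ℚ] A) (F : ι → A) : Prop :=
  ∀ a, δv (F a) =
    - (∑ b, S.D a (X b) * F b) - S.D a (S.div1 X) - ∑ c, X c * S.D c (F a)

/-- Khudaverdian–Voronov's odd quantity
`ν(F¹;F²,E) = ((-1)^{ε_A}/4)(∂_A + (F¹_A+F²_A)/2)(E^{AB}(F¹_B - F²_B))`. -/
def nu12 (E : ι → ι → A) (F1 F2 : ι → A) : A :=
  (1/4 : ℚ) • ∑ a, ∑ b, sgn (S.ε a) •
    (S.D a (E a b * (F1 b - F2 b))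
      + (1/2 : ℚ) • ((F1 a + F2 a) * (E a b * (F1 b - F2 b))))

/-- The odd Laplacian `Δ_ρ = ((-1)^{ε_A}/(2ρ)) ∂_A ρ E^{AB} ∂_B` for a density `ρ`
with inverse `ρinv`. -/
def lapRho (E : ι → ι → A) (ρ ρinv : A) : A →ₗ[ℚ] A :=
  (1/2 : ℚ) • ∑ a, ∑ b, sgn (S.ε a) •
    (L ρinv ∘ₗ S.D a ∘ₗ L ρ ∘ₗ L (E a b) ∘ₗ S.D b)

/-- `ν_ρ^{(0)} = (Δ_1 √ρ)/√ρ`, where `sq = √ρ` and `sqinv = 1/√ρ`. -/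
def nuRho0 (E : ι → ι → A) (sq sqinv : A) : A :=
  sqinv * (S.lap (fun _ => (0 : A)) E sq)

/-- `ν_ρ = ν_ρ^{(0)} + ν^{(1)}/8 - ν^{(2)}/24`. -/
def nuRho (E Einv : ι → ι → A) (sq sqinv : A) : A :=
  S.nuRho0 E sq sqinv + (1/8 : ℚ) • S.nu1 E - (1/24 : ℚ) • S.nu2 E Einv

/-- Khudaverdian's operator `Δ_E = Δ_1 + ν^{(1)}/8 - ν^{(2)}/24`. -/
def lapE (E Einv : ι → ι → A) : A →ₗ[ℚ] A :=
  S.lap (fun _ => (0 : A)) E + L ((1/8 : ℚ) • S.nu1 E - (1/24 : ℚ) • S.nu2 E Einv)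

/-- The reordered Christoffel symbols `Γ^A{}_{BC} = (-1)^{ε_A ε_B} Γ_B{}^A{}_C`. -/
def Gup (Gm : ι → ι → ι → A) (a b c : ι) : A := sgn (S.ε a * S.ε b) • Gm b a c

/-- The reordered Riemann curvature tensor
`R^A{}_{BCD} = (-1)^{ε_A ε_B}(∂_B Γ^A{}_{CD}) + Γ^A{}_{BE} Γ^E{}_{CD} - (-1)^{ε_B ε_C}(B ↔ C)`,
expressed through the reordered Christoffel symbols `Gu = Γ^·{}_{··}`. -/
def riemRe (Gu : ι → ι → ι → A) (a b c d : ι) : A :=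
  sgn (S.ε a * S.ε b) • S.D b (Gu a c d) + (∑ e, Gu a b e * Gu e c d)
  - sgn (S.ε b * S.ε c) •
      (sgn (S.ε a * S.ε c) • S.D c (Gu a b d) + ∑ e, Gu a c e * Gu e b d)

/-- The Ricci tensor `R_{AB} = R^C{}_{CAB}`. -/
def ricci (Gu : ι → ι → ι → A) (a b : ι) : A := ∑ c, S.riemRe Gu c c a b

/-- The odd scalar curvature `R = R_{AB} E^{BA}`. -/
def scalarR (Gu : ι → ι → ι → A) (E : ι → ι → A) : A :=
  ∑ a, ∑ b, S.ricci Gu a b * E b a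

/-- The Riemann curvature tensor
`R_{AB}{}^C{}_D = (∂_A Γ_B{}^C{}_D) + (-1)^{ε_B ε_C} Γ_A{}^C{}_E Γ^E{}_{BD} - (-1)^{ε_A ε_B}(A ↔ B)`,
built from the Christoffel symbols `Gm = Γ_·{}^·{}_·`. -/
def riem (Gm : ι → ι → ι → A) (a b c d : ι) : A :=
  S.D a (Gm b c d) + sgn (S.ε b * S.ε c) • (∑ e, Gm a c e * S.Gup Gm e b d)
  - sgn (S.ε a * S.ε b) •
      (S.D b (Gm a c d) + sgn (S.ε a * S.ε c) • ∑ e, Gm b c e * S.Gup Gm e a d)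

/-- The Christoffel symbols with three lower indices,
`Γ_{ABC} = E_{AD} Γ^D{}_{BC} (-1)^{ε_B}`, built from `Gu = Γ^·{}_{··}`. -/
def Glow (Einv : ι → ι → A) (Gu : ι → ι → ι → A) (a b c : ι) : A :=
  sgn (S.ε b) • ∑ d, Einv a d * Gu d b c

/-- `γ_{ABC} = Γ_{ABC} - (1/3)(E_{AB} ∂⃖_C + E_{AC} ∂⃖_B (-1)^{ε_B ε_C})`. -/
def gam (Einv : ι → ι → A) (Gu : ι → ι → ι → A) (a b c : ι) : A :=
  S.Glow Einv Gu a b c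
  - (1/3 : ℚ) • (sgn (S.ε c * (S.ε a + S.ε b)) • S.D c (Einv a b)
      + sgn (S.ε b * S.ε c) • (sgn (S.ε b * (S.ε a + S.ε c)) • S.D b (Einv a c)))

end SuperAlg

namespace SuperAlg

section OperatorCalculus

variable {ι : Type} [Fintype ι] [DecidableEq ι] {A : Type} [Ring A] [Algebra ℚ A]

theorem sgn_zero : sgn 0 = 1 := by simp [sgn]
theorem sgn_one : sgn 1 = -1 := by simp [sgn]
theorem parity_cases (p : ZMod 2) : p = 0 ∨ p = 1 := by revert p; decide
theorem one_add_one_parity : (1 + 1 : ZMod 2) = 0 := rfl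

/-- Signs are determined by their exponent modulo `2`. -/
theorem sgn_add (p q : ZMod 2) : sgn (p + q) = sgn p * sgn q := by
  rcases parity_cases p with rfl | rfl <;> rcases parity_cases q with rfl | rfl <;>
    simp [sgn_zero, sgn_one, one_add_one_parity]

theorem L_apply (f g : A) : L f g = f * g := rfl
theorem L_mul (f g : A) : L (f * g) = (L f * L g : Module.End ℚ A) := by
  ext x; simp [L_apply, mul_assoc]
theorem L_add (f g : A) : L (f + g) = L f + L g := by ext x; simp [L_apply, add_mul]
theorem L_smul (c : ℚ) (f : A) : L (c • f) = c • L f := by ext x; simp [L_apply]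
theorem L_sum {κ : Type} (s : Finset κ) (f : κ → A) : L (∑ i ∈ s, f i) = ∑ i ∈ s, L (f i) := by
  ext x; simp [L_apply, Finset.sum_mul]

/-- The rules `neg_mul` and `mul_neg`, stated here and in `end_mul_neg` with the negation of
linear maps, which is not syntactically the one of the ring of endomorphisms. -/
theorem end_neg_mul (T U : A →ₗ[ℚ] A) : -T * U = -(T * U) :=
  LinearMap.ext fun _ => rfl
theorem end_mul_neg (T U : A →ₗ[ℚ] A) : T * -U = -(T * U) :=
  LinearMap.ext fun x => map_neg T (U x)

variable (S : SuperAlg ι A)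

theorem L_comm {p q : ZMod 2} {f g : A} (hf : f ∈ S.hom p) (hg : g ∈ S.hom q) :
    (L f * L g : Module.End ℚ A) = sgn (p * q) • (L g * L f) := by
  rw [← L_mul, ← L_mul, S.supercomm hf hg, L_smul]

theorem D_mul_L (a : ι) {p : ZMod 2} {f : A} (hf : f ∈ S.hom p) :
    (S.D a * L f : Module.End ℚ A) = L (S.D a f) + sgn (S.ε a * p) • (L f * S.D a) := by
  ext x; simp [L_apply, S.D_leibniz a x hf]

theorem D_mul_D (a b : ι) :
    (S.D a * S.D b : Module.End ℚ A) = sgn (S.ε a * S.ε b) • (S.D b * S.D a) := by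
  ext x; simp [S.D_comm a b x]

/-! ### Graded derivations -/

/-- `T` is a graded derivation (a vector field) of parity `p`. The graded Leibniz rule is recorded
as the operator identity `[T, L f] = L (T f)` for homogeneous `f`. -/
def IsDer (p : ZMod 2) (T : Module.End ℚ A) : Prop :=
  ∀ (q : ZMod 2) (f : A), f ∈ S.hom q →
    T f ∈ S.hom (q + p) ∧ T * L f = L (T f) + sgn (p * q) • (L f * T)

variable {S}

theorem IsDer.add {p : ZMod 2} {T U : Module.End ℚ A} (hT : S.IsDer p T) (hU : S.IsDer p U) :
    S.IsDer p (T + U) := fun q f hf => by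
  refine ⟨(S.hom _).add_mem (hT q f hf).1 (hU q f hf).1, ?_⟩
  rw [add_mul, (hT q f hf).2, (hU q f hf).2, LinearMap.add_apply, L_add, mul_add, smul_add]
  abel

theorem IsDer.smul {p : ZMod 2} {T : Module.End ℚ A} (c : ℚ) (hT : S.IsDer p T) :
    S.IsDer p (c • T) := fun q f hf => by
  refine ⟨(S.hom _).smul_mem c (hT q f hf).1, ?_⟩
  rw [smul_mul_assoc, (hT q f hf).2, LinearMap.smul_apply, L_smul, mul_smul_comm, smul_add,
    smul_comm c]

theorem IsDer.sum {p : ZMod 2} {κ : Type} (s : Finset κ) {T : κ → Module.End ℚ A}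
    (hT : ∀ i, S.IsDer p (T i)) : S.IsDer p (∑ i ∈ s, T i) := fun q f hf => by
  rw [LinearMap.sum_apply]
  refine ⟨(S.hom _).sum_mem fun i _ => (hT i q f hf).1, ?_⟩
  rw [Finset.sum_mul, L_sum, Finset.mul_sum, Finset.smul_sum, ← Finset.sum_add_distrib]
  exact Finset.sum_congr rfl fun i _ => (hT i q f hf).2

theorem IsDer.L_mul {p r : ZMod 2} {g : A} (hg : g ∈ S.hom r) {T : Module.End ℚ A}
    (hT : S.IsDer p T) : S.IsDer (r + p) (L g * T) := fun q f hf => by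
  refine ⟨?_, ?_⟩
  · have := S.mul_mem hg (hT q f hf).1
    rwa [show q + (r + p) = r + (q + p) by ring]
  · rw [mul_assoc, (hT q f hf).2, mul_add, mul_smul_comm, ← mul_assoc (L g) (L f),
      L_comm S hg hf, Module.End.mul_apply, L_apply, SuperAlg.L_mul, smul_mul_assoc, smul_smul,
      ← sgn_add, mul_assoc, add_mul, add_comm (p * q)]

/-- The graded commutator of two graded derivations is a graded derivation. -/
theorem IsDer.comm {p r : ZMod 2} {T U : Module.End ℚ A} (hT : S.IsDer p T)
    (hU : S.IsDer r U) : S.IsDer (p + r) (T * U - sgn (p * r) • (U * T)) := fun q f hf => by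
  have hTf := hT q f hf
  have hUf := hU q f hf
  have hTU := hT _ _ hUf.1
  have hUT := hU _ _ hTf.1
  refine ⟨(S.hom _).sub_mem ?_ ((S.hom _).smul_mem _ ?_), ?_⟩
  · rw [show q + (p + r) = q + r + p by ring]; exact hTU.1
  · rw [← add_assoc]; exact hUT.1
  · have e1 : T * U * L f = L (T (U f)) + sgn (p * (q + r)) • (L (U f) * T)
        + sgn (r * q) • (L (T f) * U + sgn (p * q) • (L f * (T * U))) := by
      rw [mul_assoc, hUf.2, mul_add, hTU.2, mul_smul_comm, ← mul_assoc, hTf.2, add_mul,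
        smul_mul_assoc, mul_assoc (L f)]
    have e2 : U * T * L f = L (U (T f)) + sgn (r * (q + p)) • (L (T f) * U)
        + sgn (p * q) • (L (U f) * T + sgn (r * q) • (L f * (U * T))) := by
      rw [mul_assoc, hTf.2, mul_add, hUT.2, mul_smul_comm, ← mul_assoc, hUf.2, add_mul,
        smul_mul_assoc, mul_assoc (L f)]
    have e3 : L ((T * U - sgn (p * r) • (U * T)) f)
        = L (T (U f)) - sgn (p * r) • L (U (T f)) := by
      ext x; simp [L_apply, sub_mul]
    rw [sub_mul, smul_mul_assoc, e1, e2, e3]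
    simp only [mul_sub, mul_smul_comm]
    rcases parity_cases p with rfl | rfl <;> rcases parity_cases q with rfl | rfl <;>
      rcases parity_cases r with rfl | rfl <;>
      simp only [sgn_zero, sgn_one, one_add_one_parity, mul_zero,
        mul_one, add_zero, zero_add] <;> module

/-- A graded derivation is a differential operator of order at most one. -/
theorem IsDer.isFirstOrder {p : ZMod 2} {T : Module.End ℚ A} (hT : S.IsDer p T) :
    S.IsFirstOrder p T := fun q r f g hf hg => by
  have h1 : gcomm p q T (L f) = L (T f) := by
    have := (hT q f hf).2
    simp only [gcomm, ← Module.End.mul_eq_comp]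
    rw [this]; abel
  have h2 := L_comm S (hT q f hf).1 hg
  rw [h1]
  simp only [gcomm, ← Module.End.mul_eq_comp]
  rw [h2, add_comm p q, sub_self]

variable (S)

/-! ### Hamiltonian vector fields -/

/-- The Hamiltonian vector field `X^a = E^{ab} ∂_b` of the coordinate with index `a`. -/
def coordHam (E : ι → ι → A) (a : ι) : Module.End ℚ A := ∑ b, L (E a b) * S.D b

/-- The Hamiltonian vector field `(h, ·)` of a function `h` of parity `p`. -/
def ham (E : ι → ι → A) (p : ZMod 2) (h : A) : Module.End ℚ A :=
  ∑ a, sgn (S.ε a * (p + 1)) • (L (S.D a h) * S.coordHam E a)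

/-- The odd Laplacian `Δ_1 = ((-1)^{ε_a}/2) ∂_a X^a` of the trivial connection. -/
def lapOne (E : ι → ι → A) : Module.End ℚ A :=
  (1/2 : ℚ) • ∑ a, sgn (S.ε a) • (S.D a * S.coordHam E a)

theorem coordHam_apply (E : ι → ι → A) (a : ι) (h : A) :
    S.coordHam E a h = ∑ b, E a b * S.D b h := by
  simp [coordHam, L_apply]

theorem coordHam_coord (E : ι → ι → A) (a b : ι) : S.coordHam E a (S.coord b) = E a b := by
  simp [coordHam_apply, S.D_coord]

theorem ham_smul (E : ι → ι → A) (p : ZMod 2) (c : ℚ) (h : A) :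
    S.ham E p (c • h) = c • S.ham E p h := by
  simp only [ham, map_smul, L_smul, Finset.smul_sum, smul_mul_assoc]
  exact Finset.sum_congr rfl fun a _ => smul_comm _ _ _

theorem ham_add (E : ι → ι → A) (p : ZMod 2) (g h : A) :
    S.ham E p (g + h) = S.ham E p g + S.ham E p h := by
  simp only [ham, map_add, L_add, add_mul, smul_add, Finset.sum_add_distrib]

theorem ham_sum (E : ι → ι → A) (p : ZMod 2) (h : ι → A) :
    S.ham E p (∑ i, h i) = ∑ i, S.ham E p (h i) := by
  simp only [ham, map_sum, L_sum, Finset.sum_mul, Finset.smul_sum]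
  exact Finset.sum_comm

theorem ham_coord (E : ι → ι → A) (a : ι) : S.ham E (S.ε a) (S.coord a) = S.coordHam E a := by
  have h : ∀ c, L (if c = a then (1 : A) else 0)
      = if c = a then (1 : Module.End ℚ A) else 0 := fun c => by
    split_ifs <;> ext x <;> simp [L_apply]
  simp only [ham, S.D_coord, h, ite_mul, one_mul, zero_mul, smul_ite, smul_zero,
    Finset.sum_ite_eq', Finset.mem_univ, if_true]
  rcases parity_cases (S.ε a) with e | e <;> simp [e, sgn_zero, one_add_one_parity]

/-- `X_{fg} = f X_g + (-1)^{ε_f ε_g} g X_f`. -/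
theorem ham_mul (E : ι → ι → A) {p q : ZMod 2} {f g : A} (hf : f ∈ S.hom p) (hg : g ∈ S.hom q) :
    S.ham E (p + q) (f * g) = L f * S.ham E q g + sgn (p * q) • (L g * S.ham E p f) := by
  simp only [ham, Finset.mul_sum, Finset.smul_sum, ← Finset.sum_add_distrib]
  refine Finset.sum_congr rfl fun a _ => ?_
  have h1 := S.supercomm (S.D_mem a hf) hg
  rw [S.D_leibniz a g hf, h1, L_add, L_smul, L_smul, L_mul, L_mul]
  simp only [add_mul, smul_mul_assoc, mul_smul_comm, smul_add, smul_smul, ← mul_assoc]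
  rcases parity_cases p with rfl | rfl <;> rcases parity_cases q with rfl | rfl <;>
    rcases parity_cases (S.ε a) with e | e <;>
    simp only [e, sgn_zero, sgn_one, one_add_one_parity, mul_zero,
        mul_one, one_mul, add_zero, zero_add] <;> module

variable {S} {E Einv : ι → ι → A}

theorem coordHam_isDer (hE : S.AntiSymp E Einv) (a : ι) :
    S.IsDer (S.ε a + 1) (S.coordHam E a) := by
  refine IsDer.sum _ fun b => ?_
  have hD : S.IsDer (S.ε b) (S.D b) := fun q f hf => ⟨S.D_mem b hf, D_mul_L S b hf⟩
  have := hD.L_mul (hE.E_mem a b)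
  have e : S.ε a + S.ε b + 1 + S.ε b = S.ε a + 1 := by
    generalize S.ε a = x; generalize S.ε b = y; revert x y; decide
  rwa [e] at this

theorem ham_isDer (hE : S.AntiSymp E Einv) {p : ZMod 2} {h : A} (hh : h ∈ S.hom p) :
    S.IsDer (p + 1) (S.ham E p h) := by
  refine IsDer.sum _ fun a => IsDer.smul _ ?_
  have := (coordHam_isDer hE a).L_mul (S.D_mem a hh)
  have e : ∀ p x : ZMod 2, p + x + (x + 1) = p + 1 := by decide
  rwa [e] at this

theorem coordHam_mem (hE : S.AntiSymp E Einv) (a : ι) {p : ZMod 2} {h : A}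
    (hh : h ∈ S.hom p) : S.coordHam E a h ∈ S.hom (p + (S.ε a + 1)) :=
  (coordHam_isDer hE a p h hh).1

/-- The components of a Hamiltonian vector field, obtained from the skewsymmetry of `E`:
`X_h = -(-1)^{(ε_h+1)(ε_b+1)} (X^b h) ∂_b`. -/
theorem ham_eq (hE : S.AntiSymp E Einv) {p : ZMod 2} {h : A} (hh : h ∈ S.hom p) :
    S.ham E p h
      = -∑ b, sgn ((p + 1) * (S.ε b + 1)) • (L (S.coordHam E b h) * S.D b) := by
  simp only [ham, coordHam_apply, L_sum, Finset.sum_mul, Finset.smul_sum,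
    ← Finset.sum_neg_distrib]
  simp only [coordHam, Finset.mul_sum, Finset.smul_sum]
  rw [Finset.sum_comm]
  refine Finset.sum_congr rfl fun b _ => Finset.sum_congr rfl fun a _ => ?_
  have h1 : (L (S.D a h) * (L (E a b) * S.D b) : Module.End ℚ A)
      = (sgn ((p + S.ε a) * (S.ε a + S.ε b + 1)) * - sgn ((S.ε a + 1) * (S.ε b + 1))) •
        (L (E b a * S.D a h) * S.D b) := by
    rw [← mul_assoc, L_comm S (S.D_mem a hh) (hE.E_mem a b), hE.E_skew a b, L_smul, L_mul]
    simp only [smul_mul_assoc, smul_smul]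
  rw [h1, smul_smul]
  rcases parity_cases p with rfl | rfl <;> rcases parity_cases (S.ε a) with e | e <;>
    rcases parity_cases (S.ε b) with e' | e' <;>
    simp [e, e', sgn_zero, sgn_one, one_add_one_parity]

/-- The Jacobi identity on coordinates: `[X^a, X^b] = X_{E^{ab}}`. -/
theorem coordHam_comm (hE : S.AntiSymp E Einv) (hJ : S.EJacobiId E) (a b : ι) :
    S.coordHam E a * S.coordHam E b
      - sgn ((S.ε a + 1) * (S.ε b + 1)) • (S.coordHam E b * S.coordHam E a)
      = S.ham E (S.ε a + S.ε b + 1) (E a b) := by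
  have key : ∀ a b, S.coordHam E a * S.coordHam E b
      = ∑ c, L (S.coordHam E a (E b c)) * S.D c
        + ∑ c, ∑ d, sgn ((S.ε a + 1) * (S.ε b + S.ε c + 1)) •
            (L (E b c) * L (E a d) * (S.D d * S.D c)) := fun a b => by
    conv_lhs => rw [coordHam.eq_1 S E b]
    rw [Finset.mul_sum, ← Finset.sum_add_distrib]
    refine Finset.sum_congr rfl fun c _ => ?_
    rw [← mul_assoc, (coordHam_isDer hE a _ _ (hE.E_mem b c)).2, add_mul, coordHam.eq_1 S E a]
    simp only [Finset.mul_sum, Finset.sum_mul, Finset.smul_sum, smul_mul_assoc, mul_assoc]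
  -- the second-order parts of the two products agree
  have h2 : ∑ c, ∑ d, sgn ((S.ε a + 1) * (S.ε b + S.ε c + 1)) •
        (L (E b c) * L (E a d) * (S.D d * S.D c) : Module.End ℚ A)
      = sgn ((S.ε a + 1) * (S.ε b + 1)) • ∑ c, ∑ d,
        sgn ((S.ε b + 1) * (S.ε a + S.ε c + 1)) •
          (L (E a c) * L (E b d) * (S.D d * S.D c) : Module.End ℚ A) := by
    rw [Finset.sum_comm]
    simp only [Finset.smul_sum]
    refine Finset.sum_congr rfl fun c _ => Finset.sum_congr rfl fun d _ => ?_
    rw [L_comm S (hE.E_mem b d) (hE.E_mem a c), D_mul_D S c d]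
    simp only [smul_mul_assoc, mul_smul_comm, smul_smul]
    congr 1
    rcases parity_cases (S.ε a) with e | e <;> rcases parity_cases (S.ε b) with e' | e' <;>
      rcases parity_cases (S.ε c) with e'' | e'' <;>
      rcases parity_cases (S.ε d) with e''' | e''' <;>
      simp [e, e', e'', e''', sgn_zero, sgn_one, one_add_one_parity]
  rw [key a b, key b a, h2, smul_add, add_sub_add_right_eq_sub, ham_eq hE (hE.E_mem a b),
    Finset.smul_sum, ← Finset.sum_sub_distrib, ← Finset.sum_neg_distrib]
  refine Finset.sum_congr rfl fun c _ => ?_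
  have hJ' : sgn ((S.ε a + 1) * (S.ε c + 1)) • S.coordHam E a (E b c)
      + sgn ((S.ε b + 1) * (S.ε a + 1)) • S.coordHam E b (E c a)
      + sgn ((S.ε c + 1) * (S.ε b + 1)) • S.coordHam E c (E a b) = 0 := by
    rw [← hJ a b c]
    simp only [coordHam_apply, Finset.sum_add_distrib, Finset.smul_sum]
  rw [hE.E_skew c a, map_smul] at hJ'
  have hJ'' : S.coordHam E a (E b c) - sgn ((S.ε a + 1) * (S.ε b + 1)) • S.coordHam E b (E a c)
      = - sgn ((S.ε a + S.ε b + 1 + 1) * (S.ε c + 1)) • S.coordHam E c (E a b) := by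
    generalize S.coordHam E a (E b c) = u at *
    generalize S.coordHam E b (E a c) = v at *
    generalize S.coordHam E c (E a b) = w at *
    rw [← sub_eq_zero]
    refine Eq.trans ?_ ((congrArg (sgn ((S.ε a + 1) * (S.ε c + 1)) • ·) hJ').trans (smul_zero _))
    rcases parity_cases (S.ε a) with e | e <;> rcases parity_cases (S.ε b) with e' | e' <;>
      rcases parity_cases (S.ε c) with e'' | e'' <;>
      simp only [e, e', e'', sgn_zero, sgn_one, one_add_one_parity, mul_zero,
        mul_one, add_zero, zero_add] <;> module
  rw [← smul_mul_assoc, ← sub_mul, ← L_smul, ← smul_mul_assoc, ← end_neg_mul, ← L_smul]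
  have : L (S.coordHam E a (E b c)) - L (sgn ((S.ε a + 1) * (S.ε b + 1)) • S.coordHam E b (E a c))
      = L (S.coordHam E a (E b c)
        - sgn ((S.ε a + 1) * (S.ε b + 1)) • S.coordHam E b (E a c)) := by
    ext x; simp [L_apply, sub_mul]
  rw [this, hJ'', neg_smul, L_smul]
  congr 1
  ext x; simp [L_apply]

/-- `[X^a, X_h] = X_{(x^a, h)}`. -/
theorem coordHam_ham_comm (hE : S.AntiSymp E Einv) (hJ : S.EJacobiId E) (a : ι) {p : ZMod 2}
    {h : A} (hh : h ∈ S.hom p) :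
    S.coordHam E a * S.ham E p h
      - sgn ((S.ε a + 1) * (p + 1)) • (S.ham E p h * S.coordHam E a)
      = S.ham E (p + (S.ε a + 1)) (S.coordHam E a h) := by
  have l1 : S.coordHam E a * S.ham E p h
      - sgn ((S.ε a + 1) * (p + 1)) • (S.ham E p h * S.coordHam E a)
      = ∑ b, sgn (S.ε b * (p + 1)) • (L (S.coordHam E a (S.D b h)) * S.coordHam E b
          + sgn ((S.ε a + 1) * (p + S.ε b)) •
            (L (S.D b h) * S.ham E (S.ε a + S.ε b + 1) (E a b))) := by
    conv_lhs => rw [ham.eq_1 S E p h]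
    rw [Finset.mul_sum, Finset.sum_mul, Finset.smul_sum, ← Finset.sum_sub_distrib]
    refine Finset.sum_congr rfl fun b _ => ?_
    rw [← coordHam_comm hE hJ a b, mul_smul_comm, ← mul_assoc,
      (coordHam_isDer hE a _ _ (S.D_mem b hh)).2]
    simp only [smul_mul_assoc, mul_smul_comm, mul_sub, add_mul, mul_assoc]
    rcases parity_cases p with rfl | rfl <;> rcases parity_cases (S.ε a) with e | e <;>
      rcases parity_cases (S.ε b) with e' | e' <;>
      simp only [e, e', sgn_zero, sgn_one, one_add_one_parity, mul_zero,
        mul_one, add_zero, zero_add] <;> module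
  have l2 : S.ham E (p + (S.ε a + 1)) (S.coordHam E a h)
      = ∑ b, ∑ c, sgn (S.ε c * (p + S.ε a)) •
        ((L (S.D c (E a b)) * L (S.D b h) + (sgn (S.ε c * (S.ε a + S.ε b + 1)) *
          sgn (S.ε c * S.ε b)) • (L (E a b) * L (S.D b (S.D c h)))) * S.coordHam E c) := by
    rw [Finset.sum_comm, ham]
    refine Finset.sum_congr rfl fun c _ => ?_
    rw [coordHam_apply, map_sum, L_sum, Finset.sum_mul, Finset.smul_sum]
    refine Finset.sum_congr rfl fun b _ => ?_
    rw [S.D_leibniz c _ (hE.E_mem a b), S.D_comm c b, mul_smul_comm, smul_smul, L_add, L_smul,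
      L_mul, L_mul, show p + (S.ε a + 1) + 1 = p + S.ε a by
        rw [add_assoc, add_assoc, one_add_one_parity, add_zero]]
  rw [l1, l2]
  simp only [smul_add, add_mul, Finset.sum_add_distrib]
  rw [add_comm]
  congr 1
  · refine Finset.sum_congr rfl fun b _ => ?_
    rw [ham, Finset.mul_sum, Finset.smul_sum, Finset.smul_sum]
    refine Finset.sum_congr rfl fun c _ => ?_
    rw [mul_smul_comm, ← mul_assoc, L_comm S (S.D_mem b hh) (S.D_mem c (hE.E_mem a b))]
    simp only [smul_mul_assoc, smul_smul]
    congr 1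
    rcases parity_cases p with rfl | rfl <;> rcases parity_cases (S.ε a) with e | e <;>
      rcases parity_cases (S.ε b) with e' | e' <;> rcases parity_cases (S.ε c) with e'' | e'' <;>
      simp [e, e', e'', sgn_zero, sgn_one, one_add_one_parity]
  · rw [Finset.sum_comm]
    refine Finset.sum_congr rfl fun c _ => ?_
    rw [coordHam_apply, L_sum, Finset.sum_mul, Finset.smul_sum]
    refine Finset.sum_congr rfl fun b _ => ?_
    rw [L_mul]
    simp only [smul_mul_assoc, smul_smul]
    congr 1
    rcases parity_cases p with rfl | rfl <;> rcases parity_cases (S.ε a) with e | e <;>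
      rcases parity_cases (S.ε b) with e' | e' <;> rcases parity_cases (S.ε c) with e'' | e'' <;>
      simp [e, e', e'', sgn_zero, sgn_one, one_add_one_parity]

/-! ### The odd Laplacian of the trivial connection -/

theorem lapOne_apply (h : A) :
    S.lapOne E h = (1/2 : ℚ) • ∑ a, sgn (S.ε a) • S.D a (S.coordHam E a h) := by
  simp [lapOne]

theorem lapOne_mem (hE : S.AntiSymp E Einv) {p : ZMod 2} {h : A} (hh : h ∈ S.hom p) :
    S.lapOne E h ∈ S.hom (p + 1) := by
  rw [lapOne_apply]
  refine (S.hom _).smul_mem _ ((S.hom _).sum_mem fun a _ => (S.hom _).smul_mem _ ?_)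
  have := S.D_mem a (coordHam_mem hE a hh)
  have e : ∀ p x : ZMod 2, p + (x + 1) + x = p + 1 := by decide
  rwa [e] at this

/-- The divergence operator applied to `X_h`:
`(-1)^{ε_a} ∂_a ∘ (X^a h) = 2 Δ_1 h + (-1)^{ε_h} X_h`. -/
theorem div_ham (hE : S.AntiSymp E Einv) {p : ZMod 2} {h : A} (hh : h ∈ S.hom p) :
    ∑ a, sgn (S.ε a) • (S.D a * L (S.coordHam E a h) : Module.End ℚ A)
      = (2 : ℚ) • L (S.lapOne E h) + sgn p • S.ham E p h := by
  rw [ham_eq hE hh, lapOne_apply, L_smul, smul_smul, L_sum, smul_neg, Finset.smul_sum,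
    ← sub_eq_add_neg]
  norm_num only
  simp only [one_smul]
  rw [Finset.smul_sum, ← Finset.sum_sub_distrib]
  refine Finset.sum_congr rfl fun a _ => ?_
  rw [D_mul_L S a (coordHam_mem hE a hh), L_smul]
  rcases parity_cases p with rfl | rfl <;> rcases parity_cases (S.ε a) with e | e <;>
    simp only [e, sgn_zero, sgn_one, one_add_one_parity, mul_zero,
        mul_one, add_zero, zero_add] <;> module

/-- `[Δ_1, h] = Δ_1 h + (-1)^{ε_h} X_h`. -/
theorem lapOne_mul_L (hE : S.AntiSymp E Einv) {p : ZMod 2} {h : A} (hh : h ∈ S.hom p) :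
    S.lapOne E * L h = L (S.lapOne E h) + sgn p • S.ham E p h + sgn p • (L h * S.lapOne E) := by
  have h1 : (2 : ℚ) • (S.lapOne E * L h)
      = ∑ a, sgn (S.ε a) • (S.D a * L (S.coordHam E a h) : Module.End ℚ A)
        + sgn p • S.ham E p h + sgn p • (L h * ((2 : ℚ) • S.lapOne E)) := by
    rw [lapOne, smul_mul_assoc, smul_smul, smul_smul, ham]
    norm_num only
    rw [one_smul, one_smul, Finset.sum_mul, Finset.mul_sum, Finset.smul_sum, Finset.smul_sum,
      ← Finset.sum_add_distrib, ← Finset.sum_add_distrib]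
    refine Finset.sum_congr rfl fun a _ => ?_
    rw [smul_mul_assoc, mul_assoc, (coordHam_isDer hE a p h hh).2, mul_add (S.D a), mul_smul_comm,
      ← mul_assoc (S.D a), D_mul_L S a hh, add_mul (L _), smul_mul_assoc (sgn (S.ε a * p)),
      mul_assoc, mul_smul_comm]
    rcases parity_cases p with rfl | rfl <;> rcases parity_cases (S.ε a) with e | e <;>
      simp only [e, sgn_zero, sgn_one, one_add_one_parity, mul_zero,
        mul_one, zero_add] <;> module
  rw [div_ham hE hh, mul_smul_comm] at h1
  have h2 := congrArg ((1/2 : ℚ) • ·) h1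
  simp only [smul_smul] at h2
  norm_num only at h2
  rw [one_smul] at h2
  rw [h2]
  module

/-- `[Δ_1, X_h] = X_{Δ_1 h}`: the Laplacian `Δ_1` is a derivation of the antibracket. -/
theorem lapOne_ham_comm (hE : S.AntiSymp E Einv) (hJ : S.EJacobiId E) {p : ZMod 2} {h : A}
    (hh : h ∈ S.hom p) :
    S.lapOne E * S.ham E p h
      = S.ham E (p + 1) (S.lapOne E h) - sgn p • (S.ham E p h * S.lapOne E) := by
  have hDX : ∀ a, S.D a * S.ham E p h - sgn (S.ε a * (p + 1)) • (S.ham E p h * S.D a)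
      = -∑ b, sgn ((p + 1) * (S.ε b + 1)) • (L (S.D a (S.coordHam E b h)) * S.D b) := fun a => by
    rw [ham_eq hE hh, end_mul_neg, end_neg_mul, smul_neg, sub_neg_eq_add, neg_add_eq_sub, ← neg_sub,
      Finset.mul_sum, Finset.sum_mul, Finset.smul_sum, ← Finset.sum_sub_distrib]
    congr 1
    refine Finset.sum_congr rfl fun b _ => ?_
    rw [mul_smul_comm, ← mul_assoc, D_mul_L S a (coordHam_mem hE b hh), add_mul (L _), smul_mul_assoc,
      smul_mul_assoc, mul_assoc, mul_assoc, D_mul_D S a b, mul_smul_comm]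
    rcases parity_cases p with rfl | rfl <;> rcases parity_cases (S.ε a) with e | e <;>
      rcases parity_cases (S.ε b) with e' | e' <;>
      simp only [e, e', sgn_zero, sgn_one, one_add_one_parity, mul_zero,
        mul_one, add_zero, zero_add] <;> module
  -- the two contributions of `[∂_a X^a, X_h]`
  have h1 : (2 : ℚ) • (S.lapOne E * S.ham E p h + sgn p • (S.ham E p h * S.lapOne E))
      = ∑ a, sgn (S.ε a) • (S.D a * S.ham E (p + (S.ε a + 1)) (S.coordHam E a h))
        + ∑ a, (sgn (S.ε a) * sgn ((S.ε a + 1) * (p + 1))) •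
          ((S.D a * S.ham E p h - sgn (S.ε a * (p + 1)) • (S.ham E p h * S.D a))
            * S.coordHam E a) := by
    rw [lapOne, smul_mul_assoc, mul_smul_comm, smul_comm (sgn p), ← smul_add, smul_smul]
    norm_num only
    rw [one_smul, Finset.sum_mul, Finset.mul_sum, Finset.smul_sum, ← Finset.sum_add_distrib,
      ← Finset.sum_add_distrib]
    refine Finset.sum_congr rfl fun a _ => ?_
    rw [← coordHam_ham_comm hE hJ a hh]
    simp only [mul_sub, sub_mul, smul_mul_assoc, mul_smul_comm, mul_assoc]
    rcases parity_cases p with rfl | rfl <;> rcases parity_cases (S.ε a) with e | e <;>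
      simp only [e, sgn_zero, sgn_one, one_add_one_parity, mul_zero,
        mul_one, one_mul, zero_add] <;> module
  have h2 : ∑ a, sgn (S.ε a) • (S.D a * S.ham E (p + (S.ε a + 1)) (S.coordHam E a h))
      = (2 : ℚ) • S.ham E (p + 1) (S.lapOne E h)
        + ∑ a, ∑ b, (sgn (S.ε a) * sgn ((S.ε a + S.ε b) * p)) •
          (L (S.D b (S.coordHam E a h)) * S.D a * S.coordHam E b) := by
    have h3 : (2 : ℚ) • S.ham E (p + 1) (S.lapOne E h)
        = ∑ a, ∑ b, (sgn (S.ε a) * sgn (S.ε b * p)) •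
          (L (S.D b (S.D a (S.coordHam E a h))) * S.coordHam E b) := by
      rw [lapOne_apply, ham_smul, smul_smul, ham_sum]
      norm_num only
      rw [one_smul]
      refine Finset.sum_congr rfl fun a _ => ?_
      rw [ham_smul, ham, Finset.smul_sum]
      refine Finset.sum_congr rfl fun b _ => ?_
      rw [smul_smul, add_assoc, one_add_one_parity, add_zero]
    rw [h3, ← Finset.sum_add_distrib]
    refine Finset.sum_congr rfl fun a _ => ?_
    rw [← Finset.sum_add_distrib, ham, Finset.mul_sum, Finset.smul_sum]
    refine Finset.sum_congr rfl fun b _ => ?_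
    rw [mul_smul_comm, ← mul_assoc, D_mul_L S a (S.D_mem b (coordHam_mem hE a hh)),
      S.D_comm a b, L_smul]
    simp only [add_mul, smul_mul_assoc]
    rcases parity_cases p with rfl | rfl <;> rcases parity_cases (S.ε a) with e | e <;>
      rcases parity_cases (S.ε b) with e' | e' <;>
      simp only [e, e', sgn_zero, sgn_one, one_add_one_parity, mul_zero,
        mul_one, one_mul, add_zero, zero_add] <;> module
  have h4 : ∑ a, (sgn (S.ε a) * sgn ((S.ε a + 1) * (p + 1))) •
          ((S.D a * S.ham E p h - sgn (S.ε a * (p + 1)) • (S.ham E p h * S.D a))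
            * S.coordHam E a)
      = -∑ a, ∑ b, (sgn (S.ε a) * sgn ((S.ε a + S.ε b) * p)) •
          (L (S.D b (S.coordHam E a h)) * S.D a * S.coordHam E b) := by
    rw [Finset.sum_comm, ← Finset.sum_neg_distrib]
    refine Finset.sum_congr rfl fun a _ => ?_
    rw [hDX a, end_neg_mul, smul_neg, Finset.sum_mul, Finset.smul_sum]
    congr 1
    refine Finset.sum_congr rfl fun b _ => ?_
    rw [smul_mul_assoc, smul_smul]
    congr 1
    rcases parity_cases p with rfl | rfl <;> rcases parity_cases (S.ε a) with e | e <;>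
      rcases parity_cases (S.ε b) with e' | e' <;>
      simp [e, e', sgn_zero, sgn_one, one_add_one_parity]
  rw [h2, h4, add_neg_cancel_right] at h1
  rw [eq_sub_iff_add_eq]
  exact smul_right_injective _ (two_ne_zero' ℚ) h1

/-- `Δ_1²` is a vector field. -/
theorem lapOne_sq_isDer (hE : S.AntiSymp E Einv) (hJ : S.EJacobiId E) :
    S.IsDer 0 (S.lapOne E * S.lapOne E) := fun q f hf => by
  have hm := lapOne_mem hE hf
  refine ⟨?_, ?_⟩
  · have := lapOne_mem hE hm
    rwa [add_assoc, one_add_one_parity] at this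
  · rw [mul_assoc, lapOne_mul_L hE hf, mul_add, mul_add, mul_smul_comm, mul_smul_comm,
      ← mul_assoc, lapOne_mul_L hE hf, lapOne_mul_L hE hm, lapOne_ham_comm hE hJ hf,
      Module.End.mul_apply]
    simp only [add_mul, smul_mul_assoc, mul_assoc]
    rcases parity_cases q with rfl | rfl <;>
      simp only [sgn_zero, sgn_one, one_add_one_parity, mul_zero,
        mul_one, zero_add] <;> module

/-! ### The square of `Δ_F` -/

variable (S)

/-- The vector field `V = (-1)^{ε_a} F_a X^a` associated with the connection `F`. -/
def connField (E : ι → ι → A) (F : ι → A) : Module.End ℚ A :=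
  ∑ a, sgn (S.ε a) • (L (F a) * S.coordHam E a)

/-- The vector field `R^{ad} ∂_d` with fixed index `a`. -/
def curvField (E : ι → ι → A) (F : ι → A) (a : ι) : Module.End ℚ A :=
  ∑ d, L (S.curvUp E F a d) * S.D d

theorem lap_eq (E : ι → ι → A) (F : ι → A) :
    S.lap F E = S.lapOne E + (1/2 : ℚ) • S.connField E F := by
  rw [lap, lapOne, connField, ← smul_add, ← Finset.sum_add_distrib]
  congr 1
  refine Finset.sum_congr rfl fun a _ => ?_
  rw [← smul_add, coordHam, Finset.mul_sum, Finset.mul_sum, ← Finset.sum_add_distrib,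
    Finset.smul_sum]
  rfl

theorem lap_curvUp_eq (E : ι → ι → A) (F : ι → A) :
    S.lap F (fun a b => S.curvUp E F a b)
      = (1/2 : ℚ) • (∑ a, sgn (S.ε a) • (S.D a * S.curvField E F a : Module.End ℚ A)
          + ∑ a, sgn (S.ε a) • (L (F a) * S.curvField E F a)) := by
  rw [lap, ← Finset.sum_add_distrib]
  congr 1
  refine Finset.sum_congr rfl fun a _ => ?_
  rw [← smul_add, curvField, Finset.mul_sum, Finset.mul_sum, ← Finset.sum_add_distrib,
    Finset.smul_sum]
  rfl

/-- `R^{ad} ∂_d = (-1)^{ε_c} (X^a F_c) X^c - E^{ab} X_{F_b}`. -/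
theorem curvField_eq (E : ι → ι → A) (F : ι → A) (a : ι) :
    S.curvField E F a = ∑ c, sgn (S.ε c) • (L (S.coordHam E a (F c)) * S.coordHam E c)
      - ∑ b, L (E a b) * S.ham E (S.ε b) (F b) := by
  have h1 : S.curvField E F a
      = ∑ b, ∑ c, sgn (S.ε c) • (L (E a b) * L (S.curv F b c) * S.coordHam E c) := by
    simp only [curvField, curvUp, coordHam, L_sum, L_smul, L_mul, Finset.sum_mul, Finset.mul_sum,
      Finset.smul_sum, smul_mul_assoc, mul_assoc]
    rw [Finset.sum_comm]
    exact Finset.sum_congr rfl fun b _ => Finset.sum_comm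
  have h2 : ∑ c, sgn (S.ε c) • (L (S.coordHam E a (F c)) * S.coordHam E c)
      = ∑ b, ∑ c, sgn (S.ε c) • (L (E a b) * L (S.D b (F c)) * S.coordHam E c) := by
    rw [Finset.sum_comm]
    refine Finset.sum_congr rfl fun c _ => ?_
    rw [coordHam_apply, L_sum, Finset.sum_mul, Finset.smul_sum]
    simp only [L_mul]
  rw [h1, h2, ← Finset.sum_sub_distrib]
  refine Finset.sum_congr rfl fun b _ => ?_
  rw [ham, Finset.mul_sum, ← Finset.sum_sub_distrib]
  refine Finset.sum_congr rfl fun c _ => ?_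
  have h3 : L (S.curv F b c)
      = L (S.D b (F c)) - sgn (S.ε b * S.ε c) • L (S.D c (F b)) := by
    ext x; simp [curv, L_apply, sub_mul]
  rw [h3]
  simp only [mul_sub, sub_mul, smul_mul_assoc, mul_smul_comm, mul_assoc]
  rcases parity_cases (S.ε b) with e | e <;> rcases parity_cases (S.ε c) with e' | e' <;>
    simp only [e, e', sgn_zero, sgn_one, one_add_one_parity, mul_zero,
        mul_one, zero_add] <;> module

variable {S}

theorem connField_isDer (hE : S.AntiSymp E Einv) {F : ι → A} (hF : ∀ a, F a ∈ S.hom (S.ε a)) :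
    S.IsDer 1 (S.connField E F) := by
  refine IsDer.sum _ fun a => IsDer.smul _ ?_
  have := (coordHam_isDer hE a).L_mul (hF a)
  rwa [show S.ε a + (S.ε a + 1) = 1 by generalize S.ε a = x; revert x; decide] at this

/-- `[Δ_1, V] = Δ_{1,R} + X_{ν₁}`, with
`ν₁ = (-1)^{ε_c} (X^c F_c) / 2 + F_c (Δ_1 x^c)`. -/
theorem lapOne_connField (hE : S.AntiSymp E Einv) (hJ : S.EJacobiId E) {F : ι → A}
    (hF : ∀ a, F a ∈ S.hom (S.ε a)) :
    S.lapOne E * S.connField E F + S.connField E F * S.lapOne E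
      = (1/2 : ℚ) • ∑ a, sgn (S.ε a) • (S.D a * S.curvField E F a : Module.End ℚ A)
        + S.ham E 1 (∑ c, ((1/2 : ℚ) • (sgn (S.ε c) • S.coordHam E c (F c))
            + F c * S.lapOne E (S.coord c))) := by
  have h1 : ∑ a, sgn (S.ε a) • (S.D a * S.curvField E F a : Module.End ℚ A)
      = ∑ c, (sgn (S.ε c) • (((2 : ℚ) • L (S.lapOne E (F c))
            + sgn (S.ε c) • S.ham E (S.ε c) (F c)) * S.coordHam E c)
          - ((2 : ℚ) • L (S.lapOne E (S.coord c)) + sgn (S.ε c) • S.coordHam E c)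
            * S.ham E (S.ε c) (F c)) := by
    conv_rhs =>
      enter [2, c]
      rw [← div_ham hE (hF c)]
      enter [2, 1, 2, 2]
      rw [← ham_coord S E c]
    simp only [← div_ham hE (S.coord_mem _), coordHam_coord, curvField_eq, Finset.sum_sub_distrib,
      mul_sub, smul_sub, Finset.mul_sum, Finset.sum_mul, Finset.smul_sum, mul_smul_comm,
      smul_mul_assoc, mul_assoc]
    congr 1
    · rw [Finset.sum_comm]
      exact Finset.sum_congr rfl fun c _ => Finset.sum_congr rfl fun a _ => smul_comm _ _ _
    · exact Finset.sum_comm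
  rw [h1, connField, Finset.mul_sum, Finset.sum_mul, Finset.smul_sum, ham_sum,
    ← Finset.sum_add_distrib, ← Finset.sum_add_distrib]
  refine Finset.sum_congr rfl fun c _ => ?_
  have e1 : S.ε c + (S.ε c + 1) = 1 := by generalize S.ε c = x; revert x; decide
  have e2 : S.ε c * (S.ε c + 1) = 0 := by generalize S.ε c = x; revert x; decide
  have h2 := coordHam_ham_comm hE hJ c (hF c)
  have h3 := ham_mul S E (hF c) (lapOne_mem hE (S.coord_mem c))
  have h4 := lapOne_ham_comm hE hJ (S.coord_mem c)
  rw [ham_coord] at h4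
  rw [e1] at h2 h3
  rw [e2, sgn_zero, one_smul] at h3
  rw [ham_add, ham_smul, ham_smul, h3, ← h2, mul_smul_comm, ← mul_assoc, lapOne_mul_L hE (hF c)]
  simp only [add_mul, smul_mul_assoc, mul_assoc, h4, mul_sub, mul_smul_comm]
  rcases parity_cases (S.ε c) with e | e <;>
    simp only [e, sgn_zero, sgn_one, one_add_one_parity, mul_zero, mul_one, zero_add] <;>
    module

/-- `V² = V_R + X_{ν₂}/2`, with `V_R = (-1)^{ε_a} F_a R^{ad} ∂_d` and
`ν₂ = (-1)^{ε_a} F_a E^{ab} F_b`. -/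
theorem connField_sq (hE : S.AntiSymp E Einv) (hJ : S.EJacobiId E) {F : ι → A}
    (hF : ∀ a, F a ∈ S.hom (S.ε a)) :
    S.connField E F * S.connField E F
      = ∑ a, sgn (S.ε a) • (L (F a) * S.curvField E F a)
        + (1/2 : ℚ) • S.ham E 1 (∑ a, ∑ b, sgn (S.ε a) • (F a * (E a b * F b))) := by
  -- `Q` is the quadratic term, `P` its reduction through `[X^a, X^b] = X_{E^{ab}}`
  set Q : Module.End ℚ A := ∑ a, ∑ b, sgn (S.ε a + S.ε a * S.ε b) •
    (L (F a) * L (F b) * (S.coordHam E a * S.coordHam E b)) with hQ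
  set P : Module.End ℚ A := ∑ a, ∑ b, sgn (S.ε a + S.ε a * S.ε b) •
    (L (F a) * L (F b) * S.ham E (S.ε a + S.ε b + 1) (E a b)) with hP
  set W : Module.End ℚ A := ∑ a, ∑ b, sgn (S.ε a) •
    (L (F a) * L (E a b) * S.ham E (S.ε b) (F b)) with hW
  have hQP : Q + Q = P := by
    conv_lhs => enter [2]; rw [hQ, Finset.sum_comm]
    rw [hQ, hP, ← Finset.sum_add_distrib]
    refine Finset.sum_congr rfl fun a _ => ?_
    rw [← Finset.sum_add_distrib]
    refine Finset.sum_congr rfl fun b _ => ?_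
    rw [← coordHam_comm hE hJ a b, L_comm S (hF b) (hF a)]
    simp only [mul_sub, smul_mul_assoc, mul_smul_comm]
    rcases parity_cases (S.ε a) with e | e <;> rcases parity_cases (S.ε b) with e' | e' <;>
      simp only [e, e', sgn_zero, sgn_one, one_add_one_parity, mul_zero,
        mul_one, add_zero, zero_add] <;> module
  have hV : S.connField E F * S.connField E F
      = ∑ a, sgn (S.ε a) • (L (F a) * S.curvField E F a) + W + Q := by
    rw [connField, Finset.sum_mul, hW, hQ, ← Finset.sum_add_distrib, ← Finset.sum_add_distrib]
    refine Finset.sum_congr rfl fun a _ => ?_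
    rw [curvField_eq, mul_sub, Finset.mul_sum, Finset.mul_sum, Finset.mul_sum,
      ← Finset.sum_sub_distrib, Finset.smul_sum, ← Finset.sum_add_distrib,
      ← Finset.sum_add_distrib]
    refine Finset.sum_congr rfl fun b _ => ?_
    rw [smul_mul_assoc, mul_smul_comm, mul_assoc (L (F a)), ← mul_assoc (S.coordHam E a),
      (coordHam_isDer hE a _ _ (hF b)).2]
    simp only [mul_add, add_mul, smul_mul_assoc, mul_smul_comm, mul_assoc]
    rcases parity_cases (S.ε a) with e | e <;> rcases parity_cases (S.ε b) with e' | e' <;>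
      simp only [e, e', sgn_zero, sgn_one, one_add_one_parity, mul_zero,
        mul_one, add_zero, zero_add] <;> module
  have hX : S.ham E 1 (∑ a, ∑ b, sgn (S.ε a) • (F a * (E a b * F b))) = W + W + P := by
    have hW' : W = ∑ a, ∑ b, sgn (S.ε a) • (L (E a b * F b) * S.ham E (S.ε a) (F a)) := by
      rw [hW, Finset.sum_comm]
      refine Finset.sum_congr rfl fun a _ => Finset.sum_congr rfl fun b _ => ?_
      rw [L_comm S (hF b) (hE.E_mem b a), hE.E_skew b a, L_smul, L_mul]
      simp only [smul_mul_assoc, smul_smul]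
      congr 1
      rcases parity_cases (S.ε a) with e | e <;> rcases parity_cases (S.ε b) with e' | e' <;>
        simp [e, e', sgn_zero, sgn_one, one_add_one_parity]
    conv_rhs => enter [1, 2]; rw [hW']
    rw [hW, hP, ham_sum, ← Finset.sum_add_distrib, ← Finset.sum_add_distrib]
    refine Finset.sum_congr rfl fun a _ => ?_
    rw [ham_sum, ← Finset.sum_add_distrib, ← Finset.sum_add_distrib]
    refine Finset.sum_congr rfl fun b _ => ?_
    have h1 := ham_mul S E (hE.E_mem a b) (hF b)
    have h2 := ham_mul S E (hF a) (S.mul_mem (hE.E_mem a b) (hF b))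
    have e1 : S.ε a + (S.ε a + S.ε b + 1 + S.ε b) = 1 := by
      generalize S.ε a = x; generalize S.ε b = y; revert x y; decide
    rw [h1, e1] at h2
    rw [ham_smul, h2]
    simp only [mul_add, mul_smul_comm, mul_assoc]
    rcases parity_cases (S.ε a) with e | e <;> rcases parity_cases (S.ε b) with e' | e' <;>
      simp only [e, e', sgn_zero, sgn_one, one_add_one_parity, mul_zero,
        mul_one, add_zero, zero_add] <;> module
  rw [hV, hX, ← hQP]
  module

/-- `Δ_F² = Δ_1² + Δ_{F,R}/2 + X_ν` for some odd function `ν`. -/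
theorem lap_sq (hE : S.AntiSymp E Einv) (hJ : S.EJacobiId E) {F : ι → A}
    (hF : ∀ a, F a ∈ S.hom (S.ε a)) :
    ∃ ν ∈ S.hom 1, (S.lap F E * S.lap F E : Module.End ℚ A)
      = S.lapOne E * S.lapOne E
        + (1/2 : ℚ) • S.lap F (fun a b => S.curvUp E F a b) + S.ham E 1 ν := by
  set ν₁ := ∑ c, ((1/2 : ℚ) • (sgn (S.ε c) • S.coordHam E c (F c))
            + F c * S.lapOne E (S.coord c)) with h₁
  set ν₂ := ∑ a, ∑ b, sgn (S.ε a) • (F a * (E a b * F b)) with h₂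
  have m₁ : ν₁ ∈ S.hom 1 := by
    refine (S.hom 1).sum_mem fun c _ => (S.hom 1).add_mem
      ((S.hom 1).smul_mem _ ((S.hom 1).smul_mem _ ?_)) ?_
    all_goals have e1 : S.ε c + (S.ε c + 1) = 1 := by generalize S.ε c = x; revert x; decide
    · have := coordHam_mem hE c (hF c)
      rwa [e1] at this
    · have := S.mul_mem (hF c) (lapOne_mem hE (S.coord_mem c))
      rwa [e1] at this
  have m₂ : ν₂ ∈ S.hom 1 := by
    refine (S.hom 1).sum_mem fun a _ => (S.hom 1).sum_mem fun b _ => (S.hom 1).smul_mem _ ?_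
    have := S.mul_mem (hF a) (S.mul_mem (hE.E_mem a b) (hF b))
    rwa [show S.ε a + (S.ε a + S.ε b + 1 + S.ε b) = 1 by
      generalize S.ε a = x; generalize S.ε b = y; revert x y; decide] at this
  refine ⟨(1/2 : ℚ) • ν₁ + (1/8 : ℚ) • ν₂,
    (S.hom 1).add_mem ((S.hom 1).smul_mem _ m₁) ((S.hom 1).smul_mem _ m₂), ?_⟩
  have k₁ := lapOne_connField hE hJ hF
  have k₂ := connField_sq hE hJ hF
  rw [← h₁] at k₁
  rw [← h₂] at k₂
  rw [lap_eq, lap_curvUp_eq, ham_add, ham_smul, ham_smul, mul_add, add_mul, add_mul]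
  simp only [smul_mul_assoc, mul_smul_comm]
  rw [k₂]
  have k₃ := eq_sub_of_add_eq k₁
  rw [k₃]
  module

end OperatorCalculus

/-- Lemma 1: The commutator `[Δ_F, Δ_{F,R}]` is always a differential
operator of at most first order. -/
theorem commutator_lapF_lapFR_first_order
    {ι : Type} [Fintype ι] [DecidableEq ι] {A : Type} [Ring A] [Algebra ℚ A]
    (S : SuperAlg ι A) (E Einv : ι → ι → A) (F : ι → A)
    (hE : S.AntiSymp E Einv) (hF : ∀ a, F a ∈ S.hom (S.ε a))
    (hJac : S.EJacobiId E) :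
    S.IsFirstOrder 1
      (gcomm 1 0 (S.lap F E) (S.lap F (fun a b => S.curvUp E F a b))) := by
  obtain ⟨ν, hν, hsq⟩ := lap_sq hE hJac hF
  have hm : S.lapOne E ν ∈ S.hom 0 := lapOne_mem hE hν
  set Y : Module.End ℚ A := S.lapOne E * S.lapOne E + S.ham E 1 ν with hY
  -- `Y = Δ_F² - Δ_{F,R}/2` is a vector field
  have hYder : S.IsDer 0 Y := (lapOne_sq_isDer hE hJac).add (ham_isDer hE hν)
  have hΓ : S.lap F (fun a b => S.curvUp E F a b)
      = (2 : ℚ) • (S.lap F E * S.lap F E - Y : Module.End ℚ A) := by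
    rw [hsq, hY]; module
  have hV := connField_isDer hE hF
  have hcomm := hV.comm hYder
  have hham : S.IsDer 1 (S.ham E 0 (S.lapOne E ν)) := ham_isDer hE hm
  have h1 : S.lapOne E * S.ham E 1 ν
      = S.ham E 0 (S.lapOne E ν) + S.ham E 1 ν * S.lapOne E := by
    have := lapOne_ham_comm hE hJac hν
    rw [one_add_one_parity, sgn_one] at this
    rw [this]; module
  have h2 : S.lapOne E * Y = Y * S.lapOne E + S.ham E 0 (S.lapOne E ν) := by
    rw [hY, mul_add, add_mul, h1, mul_assoc]; abel
  have key : gcomm 1 0 (S.lap F E) (S.lap F (fun a b => S.curvUp E F a b))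
      = (-2 : ℚ) • S.ham E 0 (S.lapOne E ν)
        + (-1 : ℚ) • (S.connField E F * Y - sgn (1 * 0) • (Y * S.connField E F)) := by
    simp only [gcomm, ← Module.End.mul_eq_comp]
    rw [hΓ, mul_zero, sgn_zero, one_smul, one_smul, mul_smul_comm, smul_mul_assoc, mul_sub,
      sub_mul, mul_assoc, lap_eq, add_mul _ _ Y, mul_add Y, h2, smul_mul_assoc, mul_smul_comm]
    module
  rw [key]
  exact ((hham.smul _).add (hcomm.smul _)).isFirstOrder

end SuperAlg
end
end

section
/- The first-order operator Δ_F² - (1/2)Δ_{F,R} differentiates the antibracket: for all functions f,g, (Δ_F² - (1/2)Δ_{F,R})(f,g) = ((Δ_F² - (1/2)Δ_{F,R})f, g) + (f, (Δ_F² - (1/2)Δ_{F,R})g). -/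
/-!
Write `Δ_1` for the odd Laplacian of the zero connection and `K = (-1)^{ε_a} F_a (Γ^a, ·)` for
the vector field dual to `F`, so that `Δ_F = Δ_1 + K / 2`.

The key identity is that the curvature correction removes everything but a Hamiltonian vector
field (`lapF_sq_sub_eq`): on homogeneous functions
`Δ_F² - Δ_{F,R} / 2 = Δ_1² + (ν_F^{(0)}, ·)`, with `ν_F^{(0)}` the odd function `nuF0`.
Both summands differentiate the antibracket: `(ν, ·)` does so by the Jacobi identity, and `Δ_1²`
because `Δ_1` itself is an odd derivation of the bracket (`lap0_brkt`). The latter says that the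
divergence of a commutator of Hamiltonian vector fields is determined by their divergences, the
terms with products of first derivatives cancelling in pairs.

The key identity is proved separately in each degree in `F`. Writing the raised curvature through
brackets, `R^{ad} ∂_d f = ∑_b ((-1)^{ε_b} (Γ^a, F_b) (Γ^b, f) - (Γ^a, Γ^b) (F_b, f))`
(`curvUp_D`), every term is an expression in `Δ_1` and the bracket evaluated on `F_a`, `Γ^a`
and `f`.
* Linear part (`linear_part`): `[Δ_1, K]` minus the curvature term is the Hamiltonian vector field
  of `∑_a (F_a Δ_1 Γ^a + (F_a, Γ^a) / 2)`, term by term in `a`, by the rule for `Δ_1` of a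
  product and the Jacobi identity.
* Quadratic part (`quadratic_part`): `K²` minus the curvature term is the Hamiltonian vector field
  of `½ ∑ (-1)^{ε_a} F_a E^{ac} F_c`, after symmetrizing in the pair `a`, `c`.

All sign identities are equalities of functions of finitely many parities in `ZMod 2`, and are
decided by evaluation.
-/

open scoped BigOperators

noncomputable section

namespace SuperAlg


/-! ### Elementary properties of the antibracket -/

section Calculus

variable {ι : Type} [Fintype ι] [DecidableEq ι]
variable {A : Type} [Ring A] [Algebra ℚ A]
variable {S : SuperAlg ι A} {E Einv : ι → ι → A}

/-- Membership in a homogeneous component, up to an equality of parities. -/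
theorem mem_cast {p q : ZMod 2} {a : A} (h : a ∈ S.hom p) (e : p = q) : a ∈ S.hom q :=
  e ▸ h

/-- Reversal of a triple product of homogeneous elements. -/
theorem mul_rev (S : SuperAlg ι A) {p q r : ZMod 2} {x y z : A}
    (hx : x ∈ S.hom p) (hy : y ∈ S.hom q) (hz : z ∈ S.hom r) :
    x * (y * z) = sgn (p * q + p * r + q * r) • (z * (y * x)) := by
  rw [S.supercomm hx (S.mul_mem hy hz), S.supercomm hy hz, smul_mul_assoc, smul_smul, mul_assoc]
  congr 1
  clear * -
  revert p q r; decide +kernel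

/-- The bracket `(Γ^a, f) = E^{ab} ∂_b f` with a coordinate function. -/
def xb (S : SuperAlg ι A) (E : ι → ι → A) (a : ι) (f : A) : A := ∑ b, E a b * S.D b f

theorem brkt_eq_xb (p : ZMod 2) (f g : A) :
    S.brkt E p f g = ∑ a, sgn (S.ε a * (p + 1)) • (S.D a f * S.xb E a g) := by
  simp only [brkt, xb, Finset.mul_sum, Finset.smul_sum]

theorem brkt_coord_left (a : ι) (g : A) :
    S.brkt E (S.ε a) (S.coord a) g = S.xb E a g := by
  rw [brkt_eq_xb, Finset.sum_eq_single a]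
  · have : sgn (S.ε a * (S.ε a + 1)) = 1 := by generalize S.ε a = x; revert x; decide +kernel
    rw [S.D_coord, if_pos rfl, this, one_mul, one_smul]
  · intro b _ hb
    rw [S.D_coord, if_neg hb, zero_mul, smul_zero]
  · simp

theorem xb_coord (a b : ι) : S.xb E a (S.coord b) = E a b := by
  simp [xb, S.D_coord]

theorem brkt_coord_right (p : ZMod 2) (f : A) (b : ι) :
    S.brkt E p f (S.coord b) = ∑ a, sgn (S.ε a * (p + 1)) • (S.D a f * E a b) := by
  simp only [brkt_eq_xb, xb_coord]

/-- `(f, ·)` as a first-order operator with components `(f, Γ^b)`. -/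
theorem brkt_eq_D (p : ZMod 2) (f g : A) :
    S.brkt E p f g = ∑ b, S.brkt E p f (S.coord b) * S.D b g := by
  simp only [brkt_coord_right]
  simp only [brkt, Finset.sum_mul, smul_mul_assoc, mul_assoc]
  rw [Finset.sum_comm]

/-- The bracket, for a fixed parity of the left entry, as a bilinear map. -/
def brktL (S : SuperAlg ι A) (E : ι → ι → A) (p : ZMod 2) : A →ₗ[ℚ] A →ₗ[ℚ] A :=
  LinearMap.mk₂ ℚ (S.brkt E p)
    (by intro f f' g; simp [brkt, add_mul, Finset.sum_add_distrib])
    (by intro c f g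
        simp only [brkt, map_smul, smul_mul_assoc, Finset.smul_sum, smul_comm c])
    (by intro f g g'; simp [brkt, mul_add, Finset.sum_add_distrib])
    (by intro c f g
        simp only [brkt, map_smul, mul_smul_comm, Finset.smul_sum, smul_comm c])

theorem brktL_apply (p : ZMod 2) (f g : A) : S.brktL E p f g = S.brkt E p f g := rfl

theorem brkt_add_left (p : ZMod 2) (f f' g : A) :
    S.brkt E p (f + f') g = S.brkt E p f g + S.brkt E p f' g := by
  simp only [← brktL_apply, map_add, LinearMap.add_apply]

theorem brkt_smul_left (p : ZMod 2) (c : ℚ) (f g : A) :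
    S.brkt E p (c • f) g = c • S.brkt E p f g := by
  simp only [← brktL_apply, map_smul, LinearMap.smul_apply]

theorem brkt_sum_left {κ : Type} (s : Finset κ) (p : ZMod 2) (f : κ → A) (g : A) :
    S.brkt E p (∑ i ∈ s, f i) g = ∑ i ∈ s, S.brkt E p (f i) g := by
  simp only [← brktL_apply, map_sum, LinearMap.sum_apply]

theorem brkt_add_right (p : ZMod 2) (f g g' : A) :
    S.brkt E p f (g + g') = S.brkt E p f g + S.brkt E p f g' := by
  simp only [← brktL_apply, map_add]

theorem brkt_smul_right (p : ZMod 2) (c : ℚ) (f g : A) :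
    S.brkt E p f (c • g) = c • S.brkt E p f g := by
  simp only [← brktL_apply, map_smul]

theorem brkt_sum_right {κ : Type} (s : Finset κ) (p : ZMod 2) (f : A) (g : κ → A) :
    S.brkt E p f (∑ i ∈ s, g i) = ∑ i ∈ s, S.brkt E p f (g i) := by
  simp only [← brktL_apply, map_sum]

theorem brkt_mem (hE : S.AntiSymp E Einv) {p q : ZMod 2} {f g : A}
    (hf : f ∈ S.hom p) (hg : g ∈ S.hom q) : S.brkt E p f g ∈ S.hom (p + q + 1) := by
  refine Submodule.sum_mem _ fun a _ => Submodule.sum_mem _ fun b _ =>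
    Submodule.smul_mem _ _ (mem_cast (S.mul_mem (S.D_mem a hf)
      (S.mul_mem (hE.E_mem a b) (S.D_mem b hg))) ?_)
  clear * -
  generalize S.ε a = x; generalize S.ε b = y
  revert p q x y; decide +kernel

theorem brkt_skew (hE : S.AntiSymp E Einv) {p q : ZMod 2} {f g : A}
    (hf : f ∈ S.hom p) (hg : g ∈ S.hom q) :
    S.brkt E p f g = -sgn ((p + 1) * (q + 1)) • S.brkt E q g f := by
  simp only [brkt, Finset.smul_sum]
  rw [Finset.sum_comm]
  refine Finset.sum_congr rfl fun b _ => Finset.sum_congr rfl fun a _ => ?_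
  rw [mul_rev S (S.D_mem a hf) (hE.E_mem a b) (S.D_mem b hg), hE.E_skew a b]
  simp only [smul_mul_assoc, mul_smul_comm, smul_smul]
  congr 1
  clear * -
  generalize S.ε a = x; generalize S.ε b = y
  revert p q x y; decide +kernel

/-- The Leibniz rule in the left entry; `h` need not be homogeneous. -/
theorem brkt_mul_left (p q : ZMod 2) {f g : A} (h : A)
    (hf : f ∈ S.hom p) (hg : g ∈ S.hom q) :
    S.brkt E (p + q) (f * g) h
      = f * S.brkt E q g h + sgn (p * q) • (g * S.brkt E p f h) := by
  simp only [brkt_eq_xb, Finset.mul_sum, Finset.smul_sum, ← Finset.sum_add_distrib]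
  refine Finset.sum_congr rfl fun a _ => ?_
  rw [S.D_leibniz a g hf, S.supercomm (S.D_mem a hf) hg]
  simp only [add_mul, smul_add, smul_mul_assoc, mul_smul_comm, smul_smul, mul_assoc]
  rw [add_comm]
  congr 2 <;>
  · clear * -
    generalize S.ε a = x
    revert p q x; decide +kernel

/-- The Leibniz rule in the right entry; `h` need not be homogeneous. -/
theorem brkt_mul_right (hE : S.AntiSymp E Einv) {p q : ZMod 2} {f g : A} (h : A)
    (hf : f ∈ S.hom p) (hg : g ∈ S.hom q) :
    S.brkt E p f (g * h)
      = S.brkt E p f g * h + sgn ((p + 1) * q) • (g * S.brkt E p f h) := by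
  rw [brkt_eq_D p f (g * h), brkt_eq_D p f g, brkt_eq_D p f h]
  simp only [Finset.mul_sum, Finset.sum_mul, Finset.smul_sum, ← Finset.sum_add_distrib]
  refine Finset.sum_congr rfl fun b _ => ?_
  rw [S.D_leibniz b h hg, mul_add, mul_smul_comm, ← mul_assoc _ g,
    S.supercomm (brkt_mem hE hf (S.coord_mem b)) hg]
  simp only [smul_mul_assoc, smul_smul, mul_assoc]
  congr 2
  clear * -
  generalize S.ε b = x
  revert p q x; decide +kernel

/-- The Jacobi identity in Leibniz form: `(f, ·)` is a derivation of the bracket. -/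
theorem brkt_jacobi (hE : S.AntiSymp E Einv) (hJ : S.JacobiId E) {p q r : ZMod 2} {f g h : A}
    (hf : f ∈ S.hom p) (hg : g ∈ S.hom q) (hh : h ∈ S.hom r) :
    S.brkt E p f (S.brkt E q g h) = S.brkt E (p + q + 1) (S.brkt E p f g) h
      + sgn ((p + 1) * (q + 1)) • S.brkt E q g (S.brkt E p f h) := by
  have H := hJ p q r f g h hf hg hh
  rw [brkt_skew hE hh hf, brkt_skew hE hh (brkt_mem hE hf hg), brkt_smul_right] at H
  have H2 := congrArg (fun t => sgn ((p + 1) * (r + 1)) • t) H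
  simp only [smul_add, smul_smul, smul_zero] at H2
  have e1 : sgn ((p + 1) * (r + 1)) * sgn ((p + 1) * (r + 1)) = 1 := by
    clear * -; revert p r; decide +kernel
  have e2 : sgn ((p + 1) * (r + 1)) * (sgn ((q + 1) * (p + 1)) * -sgn ((r + 1) * (p + 1)))
      = - sgn ((p + 1) * (q + 1)) := by
    clear * -; revert p q r; decide +kernel
  have e3 : sgn ((p + 1) * (r + 1)) * (sgn ((r + 1) * (q + 1)) * -sgn ((r + 1) * (p + q + 1 + 1)))
      = - 1 := by
    clear * -; revert p q r; decide +kernel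
  rw [e1, e2, e3] at H2
  linear_combination (norm := module) H2

/-! ### The odd Laplacian of the zero connection -/

/-- The odd Laplacian `Δ_1` of the zero connection is half the divergence of the vector field with
components `(Γ^a, f)`. -/
theorem lap0_apply (f : A) :
    S.lap (fun _ => (0 : A)) E f = (1/2 : ℚ) • ∑ a, sgn (S.ε a) • S.D a (S.xb E a f) := by
  simp [lap, L, xb, Finset.smul_sum]

theorem two_lap0 (f : A) :
    ∑ a, sgn (S.ε a) • S.D a (S.xb E a f) = (2 : ℚ) • S.lap (fun _ => (0 : A)) E f := by
  rw [lap0_apply, smul_smul]; norm_num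

theorem lap0_mem (hE : S.AntiSymp E Einv) {p : ZMod 2} {f : A} (hf : f ∈ S.hom p) :
    S.lap (fun _ => (0 : A)) E f ∈ S.hom (p + 1) := by
  rw [lap0_apply]
  refine Submodule.smul_mem _ _ (Submodule.sum_mem _ fun a _ => Submodule.smul_mem _ _ ?_)
  rw [← brkt_coord_left]
  refine mem_cast (S.D_mem a (brkt_mem hE (S.coord_mem a) hf)) ?_
  clear * -
  generalize S.ε a = x
  revert p x; decide +kernel

/-- The divergence of the vector field with components `(Γ^a, u) w`. -/
theorem div_xb_mul (hE : S.AntiSymp E Einv) {p : ZMod 2} {u : A} (w : A) (hu : u ∈ S.hom p) :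
    ∑ a, sgn (S.ε a) • S.D a (S.xb E a u * w)
      = (2 : ℚ) • (S.lap (fun _ => (0 : A)) E u * w) + sgn p • S.brkt E p u w := by
  rw [← smul_mul_assoc, ← two_lap0, brkt_eq_D p u w, Finset.sum_mul, Finset.smul_sum,
    ← Finset.sum_add_distrib]
  refine Finset.sum_congr rfl fun a _ => ?_
  rw [brkt_skew hE hu (S.coord_mem a), ← brkt_coord_left,
    S.D_leibniz a w (brkt_mem hE (S.coord_mem a) hu)]
  simp only [smul_add, smul_mul_assoc, smul_smul]
  congr 2
  clear * -
  generalize S.ε a = x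
  revert p x; decide +kernel

/-- The bracket measures the failure of `Δ_1` to be a derivation of the product. -/
theorem lap0_mul (hE : S.AntiSymp E Einv) {p q : ZMod 2} {u w : A}
    (hu : u ∈ S.hom p) (hw : w ∈ S.hom q) :
    S.lap (fun _ => (0 : A)) E (u * w)
      = S.lap (fun _ => (0 : A)) E u * w + sgn p • (u * S.lap (fun _ => (0 : A)) E w)
        + sgn p • S.brkt E p u w := by
  have h1 : ∀ a, S.xb E a (u * w) = S.xb E a u * w + sgn (p * q) • (S.xb E a w * u) := by
    intro a
    rw [← brkt_coord_left, brkt_mul_right hE w (S.coord_mem a) hu,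
      S.supercomm hu (brkt_mem hE (S.coord_mem a) hw), smul_smul]
    simp only [brkt_coord_left]
    congr 2
    clear * -
    generalize S.ε a = x
    revert p q x; decide +kernel
  have h2 : (2 : ℚ) • S.lap (fun _ => (0 : A)) E (u * w)
      = ((2 : ℚ) • (S.lap (fun _ => (0 : A)) E u * w) + sgn p • S.brkt E p u w)
      + sgn (p * q) • ((2 : ℚ) • (S.lap (fun _ => (0 : A)) E w * u) + sgn q • S.brkt E q w u) := by
    rw [← two_lap0, ← div_xb_mul hE w hu, ← div_xb_mul hE u hw, Finset.smul_sum,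
      ← Finset.sum_add_distrib]
    refine Finset.sum_congr rfl fun a _ => ?_
    rw [h1, map_add, map_smul, smul_add, smul_comm]
  rw [brkt_skew hE hw hu, S.supercomm (lap0_mem hE hw) hu] at h2
  have e1 : sgn (p * q) * sgn ((q + 1) * p) = sgn p := by clear * -; revert p q; decide +kernel
  have e2 : sgn (p * q) * (sgn q * -sgn ((q + 1) * (p + 1))) = sgn p := by
    clear * -; revert p q; decide +kernel
  simp only [smul_add, smul_smul] at h2
  rw [mul_left_comm, e1, e2] at h2
  linear_combination (norm := module) (1/2 : ℚ) • h2

/-- The derivative of `(f, G)`, with the terms in which `∂_a` passes through the operator `(f, ·)`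
collected into `(f, ∂_a G)`. -/
theorem D_brkt (hE : S.AntiSymp E Einv) {p : ZMod 2} {f : A} (G : A) (hf : f ∈ S.hom p)
    (a : ι) :
    S.D a (S.brkt E p f G) = ∑ b, S.D a (S.brkt E p f (S.coord b)) * S.D b G
      + sgn (S.ε a * (p + 1)) • S.brkt E p f (S.D a G) := by
  rw [brkt_eq_D p f G, brkt_eq_D p f (S.D a G), map_sum, Finset.smul_sum,
    ← Finset.sum_add_distrib]
  refine Finset.sum_congr rfl fun b _ => ?_
  rw [S.D_leibniz a _ (brkt_mem hE hf (S.coord_mem b)), S.D_comm a b, mul_smul_comm, smul_smul]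
  congr 2
  clear * -
  generalize S.ε a = x; generalize S.ε b = y
  revert p x y; decide +kernel

/-- `Δ_1 g` as a divergence of the components `(g, Γ^a)`, in the opposite order to `two_lap0`. -/
theorem two_lap0' (hE : S.AntiSymp E Einv) {q : ZMod 2} {g : A} (hg : g ∈ S.hom q) :
    (2 : ℚ) • S.lap (fun _ => (0 : A)) E g
      = ∑ a, -sgn (S.ε a * q + q + 1) • S.D a (S.brkt E q g (S.coord a)) := by
  rw [← two_lap0]
  refine Finset.sum_congr rfl fun a _ => ?_
  rw [← brkt_coord_left, brkt_skew hE (S.coord_mem a) hg, map_smul, smul_smul]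
  congr 1
  clear * -
  generalize S.ε a = x
  revert q x; decide +kernel

/-- `Δ_1` is an odd derivation of the antibracket. By the Jacobi identity `((f, g), ·)` is the
graded commutator of `(f, ·)` and `(g, ·)`, and the divergence of a commutator `[X, Y]` is
`X (div Y) - Y (div X)` up to signs. -/
theorem lap0_brkt (hE : S.AntiSymp E Einv) (hJ : S.JacobiId E) {p q : ZMod 2} {f g : A}
    (hf : f ∈ S.hom p) (hg : g ∈ S.hom q) :
    S.lap (fun _ => (0 : A)) E (S.brkt E p f g)
      = S.brkt E (p + 1) (S.lap (fun _ => (0 : A)) E f) g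
        + sgn (p + 1) • S.brkt E p f (S.lap (fun _ => (0 : A)) E g) := by
  -- the quadratic terms in first derivatives of the Hamiltonian vector fields cancel pairwise
  have hcan : ∑ a, ∑ b, -sgn (S.ε a + (S.ε a + 1) * (p + q)) •
        (S.D a (S.brkt E p f (S.coord b)) * S.D b (S.brkt E q g (S.coord a)))
      = ∑ a, ∑ b, (-sgn (S.ε a + (S.ε a + 1) * (p + q)) * sgn ((p + 1) * (q + 1))) •
        (S.D a (S.brkt E q g (S.coord b)) * S.D b (S.brkt E p f (S.coord a))) := by
    rw [Finset.sum_comm]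
    refine Finset.sum_congr rfl fun a _ => Finset.sum_congr rfl fun b _ => ?_
    rw [S.supercomm (S.D_mem b (brkt_mem hE hf (S.coord_mem a)))
      (S.D_mem a (brkt_mem hE hg (S.coord_mem b))), smul_smul]
    congr 1
    clear * -
    generalize S.ε a = x; generalize S.ε b = y
    revert p q x y; decide +kernel
  have hx : ∀ a, sgn (S.ε a) • S.D a (S.xb E a (S.brkt E p f g))
      = ((∑ b, -sgn (S.ε a + (S.ε a + 1) * (p + q)) •
          (S.D a (S.brkt E p f (S.coord b)) * S.D b (S.brkt E q g (S.coord a))))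
        - ∑ b, (-sgn (S.ε a + (S.ε a + 1) * (p + q)) * sgn ((p + 1) * (q + 1))) •
          (S.D a (S.brkt E q g (S.coord b)) * S.D b (S.brkt E p f (S.coord a))))
        + (sgn (p + 1) • S.brkt E p f
              (-sgn (S.ε a * q + q + 1) • S.D a (S.brkt E q g (S.coord a)))
          - sgn ((q + 1) * p) • S.brkt E q g
              (-sgn (S.ε a * p + p + 1) • S.D a (S.brkt E p f (S.coord a)))) := by
    intro a
    -- the component `((f, g), Γ^a)` as a commutator of Hamiltonian vector fields
    have h1 := brkt_jacobi hE hJ hf hg (S.coord_mem a)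
    rw [← sub_eq_iff_eq_add] at h1
    rw [← brkt_coord_left, brkt_skew hE (S.coord_mem a) (brkt_mem hE hf hg), ← h1,
      map_smul, map_sub, map_smul, D_brkt hE (S.brkt E q g (S.coord a)) hf,
      D_brkt hE (S.brkt E p f (S.coord a)) hg]
    simp only [← Finset.smul_sum, brkt_smul_right, smul_smul]
    simp only [smul_add, smul_sub, smul_smul]
    have e1 : sgn (S.ε a) * -sgn ((S.ε a + 1) * (p + q + 1 + 1))
        = -sgn (S.ε a + (S.ε a + 1) * (p + q)) := by
      clear * -; generalize S.ε a = x; revert p q x; decide +kernel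
    have e2 : -sgn (S.ε a + (S.ε a + 1) * (p + q)) * sgn (S.ε a * (p + 1))
        = sgn (p + 1) * -sgn (S.ε a * q + q + 1) := by
      clear * -; generalize S.ε a = x; revert p q x; decide +kernel
    have e3 : -sgn (S.ε a + (S.ε a + 1) * (p + q)) *
          (sgn ((p + 1) * (q + 1)) * sgn (S.ε a * (q + 1)))
        = sgn ((q + 1) * p) * -sgn (S.ε a * p + p + 1) := by
      clear * -; generalize S.ε a = x; revert p q x; decide +kernel
    simp only [e1]
    rw [e2, e3]
    abel
  have h2 := two_lap0 (S := S) (E := E) (S.brkt E p f g)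
  rw [Finset.sum_congr rfl fun a _ => hx a] at h2
  simp only [Finset.sum_add_distrib, Finset.sum_sub_distrib, ← Finset.smul_sum,
    ← brkt_sum_right] at h2
  rw [← two_lap0' hE hf, ← two_lap0' hE hg] at h2
  simp only [Finset.smul_sum] at h2
  rw [hcan, sub_self, zero_add, brkt_smul_right, brkt_smul_right,
    brkt_skew hE hg (lap0_mem hE hf)] at h2
  have e4 : sgn ((q + 1) * p) * (2 * -sgn ((q + 1) * (p + 1 + 1))) = -2 := by
    clear * -; revert p q; decide +kernel
  simp only [smul_smul] at h2
  rw [e4] at h2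
  linear_combination (norm := module) -(1/2 : ℚ) • h2

/-! ### The connection and its raised curvature -/

/-- The vector field `K = (-1)^{ε_a} F_a E^{ab} ∂_b` dual to the connection `F`, so that
`Δ_F = Δ_1 + K / 2`. -/
def connVec (S : SuperAlg ι A) (E : ι → ι → A) (F : ι → A) (f : A) : A :=
  ∑ a, sgn (S.ε a) • (F a * S.brkt E (S.ε a) (S.coord a) f)

/-- The components `R^{ad} ∂_d f` of the vector field attached to `f` by the raised curvature,
written through brackets as
`∑_b ((-1)^{ε_b} (Γ^a, F_b) (Γ^b, f) - (Γ^a, Γ^b) (F_b, f))`. -/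
def curvVec (S : SuperAlg ι A) (E : ι → ι → A) (F : ι → A) (f : A) (a : ι) : A :=
  ∑ b, (sgn (S.ε b) • (S.brkt E (S.ε a) (S.coord a) (F b) * S.brkt E (S.ε b) (S.coord b) f)
    - S.brkt E (S.ε a) (S.coord a) (S.coord b) * S.brkt E (S.ε b) (F b) f)

theorem lap_eq_lap0_add (F : ι → A) (f : A) :
    S.lap F E f = S.lap (fun _ => (0 : A)) E f + (1/2 : ℚ) • S.connVec E F f := by
  rw [lap0_apply]
  simp only [lap, connVec, brkt_coord_left, xb, L, LinearMap.smul_apply, LinearMap.sum_apply,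
    LinearMap.add_apply, LinearMap.comp_apply, LinearMap.mulLeft_apply, smul_add, map_sum,
    Finset.mul_sum, Finset.smul_sum, Finset.sum_add_distrib]

theorem curvUp_D (F : ι → A) (f : A) (a : ι) :
    ∑ d, S.curvUp E F a d * S.D d f = S.curvVec E F f a := by
  have h1 : ∑ d, S.curvUp E F a d * S.D d f
      = ∑ b, ∑ c, (sgn (S.ε c) • (E a b * S.D b (F c) * S.xb E c f)
        - E a b * (sgn (S.ε c * (S.ε b + 1)) • (S.D c (F b) * S.xb E c f))) := by
    simp only [curvUp, Finset.sum_mul]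
    rw [Finset.sum_comm]
    refine Finset.sum_congr rfl fun b _ => ?_
    rw [Finset.sum_comm]
    refine Finset.sum_congr rfl fun c _ => ?_
    have e : sgn (S.ε c * (S.ε b + 1)) = sgn (S.ε c) * sgn (S.ε b * S.ε c) := by
      generalize S.ε b = x; generalize S.ε c = y; revert x y; decide +kernel
    simp only [xb, Finset.mul_sum, Finset.smul_sum, ← Finset.sum_sub_distrib, curv, e]
    refine Finset.sum_congr rfl fun d _ => ?_
    simp only [sub_mul, mul_sub, smul_sub, smul_mul_assoc, mul_smul_comm, smul_smul, mul_assoc]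
  rw [h1, curvVec]
  simp only [Finset.sum_sub_distrib, brkt_coord_left]
  congr 1
  · rw [Finset.sum_comm]
    refine Finset.sum_congr rfl fun c _ => ?_
    simp only [xb, Finset.sum_mul, Finset.smul_sum]
  · refine Finset.sum_congr rfl fun b _ => ?_
    rw [xb_coord, brkt_eq_xb, Finset.mul_sum]

theorem lap_curvUp (F : ι → A) (f : A) :
    S.lap F (fun a b => S.curvUp E F a b) f
      = (1/2 : ℚ) • ((∑ a, sgn (S.ε a) • S.D a (S.curvVec E F f a))
        + ∑ a, sgn (S.ε a) • (F a * S.curvVec E F f a)) := by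
  simp only [← curvUp_D, lap, L, LinearMap.smul_apply, LinearMap.sum_apply,
    LinearMap.add_apply, LinearMap.comp_apply, LinearMap.mulLeft_apply, smul_add, map_sum,
    Finset.mul_sum, Finset.smul_sum, Finset.sum_add_distrib]

/-! ### The part linear in the connection -/

/-- The contribution of a one-form `u dv` to the part of `Δ_F² - Δ_{F,R} / 2` linear in the
connection, up to an overall factor: it is the Hamiltonian vector field of
`u Δ_1 v + (u, v) / 2`. -/
theorem linear_term (hE : S.AntiSymp E Einv) (hJ : S.JacobiId E) {p r : ZMod 2} {u v f : A}
    (hu : u ∈ S.hom p) (hv : v ∈ S.hom p) (hf : f ∈ S.hom r) :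
    sgn p • S.lap (fun _ => (0 : A)) E (u * S.brkt E p v f)
      + sgn p • (u * S.brkt E p v (S.lap (fun _ => (0 : A)) E f))
      - (1/2 : ℚ) • (sgn p • ((2 : ℚ) • (S.lap (fun _ => (0 : A)) E u * S.brkt E p v f)
            + sgn p • S.brkt E p u (S.brkt E p v f))
          - ((2 : ℚ) • (S.lap (fun _ => (0 : A)) E v * S.brkt E p u f)
            + sgn p • S.brkt E p v (S.brkt E p u f)))
      = S.brkt E 1 (u * S.lap (fun _ => (0 : A)) E v + (1/2 : ℚ) • S.brkt E p u v) f := by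
  have e1 : p + (p + 1) = 1 := by clear * -; revert p; decide
  have e2 : p + p + 1 = 1 := by clear * -; revert p; decide
  have h1 := brkt_mul_left (E := E) p (p + 1) f hu (lap0_mem hE hv)
  have h2 := brkt_jacobi hE hJ hu hv hf
  rw [e1] at h1
  rw [e2] at h2
  rw [brkt_add_left, brkt_smul_left, h1, h2, lap0_mul hE hu (brkt_mem hE hv hf),
    lap0_brkt hE hJ hv hf, h2, mul_add, mul_smul_comm]
  match_scalars <;> (clear * -; decide +kernel +revert)

theorem linear_part (hE : S.AntiSymp E Einv) (hJ : S.JacobiId E) {F : ι → A}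
    (hF : ∀ a, F a ∈ S.hom (S.ε a)) {r : ZMod 2} {f : A} (hf : f ∈ S.hom r) :
    S.lap (fun _ => (0 : A)) E (S.connVec E F f)
      + S.connVec E F (S.lap (fun _ => (0 : A)) E f)
      - (1/2 : ℚ) • ∑ a, sgn (S.ε a) • S.D a (S.curvVec E F f a)
      = S.brkt E 1 (∑ a, (F a * S.lap (fun _ => (0 : A)) E (S.coord a)
          + (1/2 : ℚ) • S.brkt E (S.ε a) (F a) (S.coord a))) f := by
  have h1 : ∑ a, sgn (S.ε a) • S.D a (S.curvVec E F f a)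
      = ∑ b, (sgn (S.ε b) • ((2 : ℚ) • (S.lap (fun _ => (0 : A)) E (F b)
                * S.brkt E (S.ε b) (S.coord b) f)
            + sgn (S.ε b) • S.brkt E (S.ε b) (F b) (S.brkt E (S.ε b) (S.coord b) f))
          - ((2 : ℚ) • (S.lap (fun _ => (0 : A)) E (S.coord b) * S.brkt E (S.ε b) (F b) f)
            + sgn (S.ε b) • S.brkt E (S.ε b) (S.coord b) (S.brkt E (S.ε b) (F b) f))) := by
    simp only [curvVec, map_sum, Finset.smul_sum]
    rw [Finset.sum_comm]
    refine Finset.sum_congr rfl fun b _ => ?_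
    rw [← div_xb_mul hE _ (hF b), ← div_xb_mul hE _ (S.coord_mem b), Finset.smul_sum,
      ← Finset.sum_sub_distrib]
    refine Finset.sum_congr rfl fun a _ => ?_
    rw [map_sub, map_smul, smul_sub, smul_comm, brkt_coord_left a (F b),
      brkt_coord_left a (S.coord b)]
  rw [h1, brkt_sum_left]
  simp only [connVec, map_sum, map_smul]
  rw [Finset.smul_sum, ← Finset.sum_add_distrib, ← Finset.sum_sub_distrib]
  exact Finset.sum_congr rfl fun a _ => linear_term hE hJ (hF a) (S.coord_mem a) hf

/-! ### The part quadratic in the connection -/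

/-- The contribution of a pair of one-forms `u dv`, `s dt` to the part of
`Δ_F² - Δ_{F,R} / 2` quadratic in the connection, up to an overall factor: the derivatives of `s`
cancel against the curvature. -/
theorem quadratic_term (hE : S.AntiSymp E Einv) {p q : ZMod 2}
    {u v s t f : A} (hv : v ∈ S.hom p) (hs : s ∈ S.hom q) :
    sgn p • (u * S.brkt E p v (sgn q • (s * S.brkt E q t f)))
      - sgn p • (u * (sgn q • (S.brkt E p v s * S.brkt E q t f)
        - S.brkt E p v t * S.brkt E q s f))
      = sgn (p + p * q) • (u * (s * S.brkt E p v (S.brkt E q t f)))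
        + sgn p • (u * (S.brkt E p v t * S.brkt E q s f)) := by
  rw [brkt_smul_right, brkt_mul_right hE _ hv hs]
  simp only [mul_add, mul_sub, mul_smul_comm, smul_add]
  match_scalars <;> (clear * -; decide +kernel +revert)

/-- Symmetrizing `quadratic_term` in the two one-forms produces a Hamiltonian vector field. -/
theorem quadratic_term_symm (hE : S.AntiSymp E Einv) (hJ : S.JacobiId E) {p q r : ZMod 2}
    {u v s t f : A} (hu : u ∈ S.hom p) (hv : v ∈ S.hom p) (hs : s ∈ S.hom q)
    (ht : t ∈ S.hom q) (hf : f ∈ S.hom r) :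
    (sgn (p + p * q) • (u * (s * S.brkt E p v (S.brkt E q t f)))
        + sgn p • (u * (S.brkt E p v t * S.brkt E q s f)))
      + (sgn (q + q * p) • (s * (u * S.brkt E q t (S.brkt E p v f)))
        + sgn q • (s * (S.brkt E q t v * S.brkt E p u f)))
      = sgn p • S.brkt E 1 (u * (S.brkt E p v t * s)) f := by
  have hvt := brkt_mem hE hv ht
  have e1 : p + (p + q + 1 + q) = 1 := by clear * -; revert p q; decide
  have h1 := brkt_mul_left (E := E) p (p + q + 1 + q) f hu (S.mul_mem hvt hs)
  have h2 := brkt_mul_left (E := E) (p + q + 1) q f hvt hs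
  have h3 := brkt_jacobi hE hJ hv ht hf
  rw [e1] at h1
  rw [h1, h2, h3, S.supercomm hvt hs, brkt_skew hE ht hv, ← mul_assoc s u, S.supercomm hs hu]
  simp only [mul_add, smul_add, smul_mul_assoc, mul_smul_comm, smul_smul, mul_assoc]
  match_scalars <;> (clear * -; decide +kernel +revert)

theorem quadratic_part (hE : S.AntiSymp E Einv) (hJ : S.JacobiId E) {F : ι → A}
    (hF : ∀ a, F a ∈ S.hom (S.ε a)) {r : ZMod 2} {f : A} (hf : f ∈ S.hom r) :
    S.connVec E F (S.connVec E F f) - ∑ a, sgn (S.ε a) • (F a * S.curvVec E F f a)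
      = S.brkt E 1 ((1/2 : ℚ) • ∑ a, ∑ c, sgn (S.ε a) •
          (F a * (S.brkt E (S.ε a) (S.coord a) (S.coord c) * F c))) f := by
  have hsym : ∀ X : ι → ι → A,
      ∑ a, ∑ c, X a c = (1/2 : ℚ) • ∑ a, ∑ c, (X a c + X c a) := by
    intro X
    simp only [Finset.sum_add_distrib]
    rw [Finset.sum_comm (f := fun a c => X c a)]
    module
  have h1 : S.connVec E F (S.connVec E F f) - ∑ a, sgn (S.ε a) • (F a * S.curvVec E F f a)
      = ∑ a, ∑ c, (sgn (S.ε a + S.ε a * S.ε c) • (F a * (F c *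
            S.brkt E (S.ε a) (S.coord a) (S.brkt E (S.ε c) (S.coord c) f)))
          + sgn (S.ε a) • (F a * (S.brkt E (S.ε a) (S.coord a) (S.coord c)
            * S.brkt E (S.ε c) (F c) f))) := by
    rw [connVec, ← Finset.sum_sub_distrib]
    refine Finset.sum_congr rfl fun a _ => ?_
    rw [connVec, curvVec, brkt_sum_right]
    simp only [Finset.mul_sum, Finset.smul_sum]
    rw [← Finset.sum_sub_distrib]
    exact Finset.sum_congr rfl fun c _ => quadratic_term hE (S.coord_mem a) (hF c)
  rw [h1, hsym, brkt_smul_left, brkt_sum_left]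
  congr 1
  refine Finset.sum_congr rfl fun a _ => ?_
  rw [brkt_sum_left]
  refine Finset.sum_congr rfl fun c _ => ?_
  rw [brkt_smul_left]
  exact quadratic_term_symm hE hJ (hF a) (S.coord_mem a) (hF c) (S.coord_mem c) hf

/-! ### The resulting Hamiltonian vector field -/

/-- `ν_F^{(0)}` is the sum of the Hamiltonian functions found in `linear_part` (with weight `1/2`)
and `quadratic_part` (with weight `1/4`). -/
theorem nuF0_eq (hE : S.AntiSymp E Einv) {F : ι → A} (hF : ∀ a, F a ∈ S.hom (S.ε a)) :
    S.nuF0 E F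
      = (1/2 : ℚ) • (∑ a, (F a * S.lap (fun _ => (0 : A)) E (S.coord a)
          + (1/2 : ℚ) • S.brkt E (S.ε a) (F a) (S.coord a)))
        + (1/8 : ℚ) • ∑ a, ∑ c, sgn (S.ε a) •
          (F a * (S.brkt E (S.ε a) (S.coord a) (S.coord c) * F c)) := by
  have h1 : ∑ a, ∑ b, sgn (S.ε a) • S.D a (E a b * F b)
      = (2 : ℚ) • ∑ a, (F a * S.lap (fun _ => (0 : A)) E (S.coord a)
          + (1/2 : ℚ) • S.brkt E (S.ε a) (F a) (S.coord a)) := by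
    rw [Finset.sum_comm, Finset.smul_sum]
    refine Finset.sum_congr rfl fun b _ => ?_
    have := div_xb_mul hE (F b) (S.coord_mem b)
    simp only [xb_coord] at this
    rw [this, S.supercomm (lap0_mem hE (S.coord_mem b)) (hF b),
      brkt_skew hE (S.coord_mem b) (hF b)]
    generalize S.ε b = x
    match_scalars <;> (clear * -; decide +kernel +revert)
  simp only [nuF0, smul_add, Finset.sum_add_distrib, h1, brkt_coord_left, xb_coord]
  simp only [Finset.smul_sum, smul_smul]
  congr 1
  · norm_num
  · refine Finset.sum_congr rfl fun a _ => Finset.sum_congr rfl fun b _ => ?_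
    module

theorem nuF0_mem (hE : S.AntiSymp E Einv) {F : ι → A} (hF : ∀ a, F a ∈ S.hom (S.ε a)) :
    S.nuF0 E F ∈ S.hom 1 := by
  refine Submodule.smul_mem _ _ (Submodule.sum_mem _ fun a _ => Submodule.sum_mem _ fun b _ =>
    Submodule.smul_mem _ _ (Submodule.add_mem _ ?_ (Submodule.smul_mem _ _ ?_)))
  · refine mem_cast (S.D_mem a (S.mul_mem (hE.E_mem a b) (hF b))) ?_
    generalize S.ε a = x; generalize S.ε b = y; revert x y; decide
  · refine mem_cast (S.mul_mem (hF a) (S.mul_mem (hE.E_mem a b) (hF b))) ?_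
    generalize S.ε a = x; generalize S.ε b = y; revert x y; decide

/-- `Δ_F² - Δ_{F,R} / 2` differs from `Δ_1²` by the Hamiltonian vector field of `ν_F^{(0)}`. -/
theorem lapF_sq_sub_eq (hE : S.AntiSymp E Einv) (hJ : S.JacobiId E) {F : ι → A}
    (hF : ∀ a, F a ∈ S.hom (S.ε a)) {r : ZMod 2} {f : A} (hf : f ∈ S.hom r) :
    ((S.lap F E) ∘ₗ (S.lap F E)
        - (1/2 : ℚ) • S.lap F (fun a b => S.curvUp E F a b)) f
      = S.lap (fun _ => (0 : A)) E (S.lap (fun _ => (0 : A)) E f)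
        + S.brkt E 1 (S.nuF0 E F) f := by
  have hK : ∀ x y : A, S.connVec E F (x + (1/2 : ℚ) • y)
      = S.connVec E F x + (1/2 : ℚ) • S.connVec E F y := by
    intro x y
    simp only [connVec, brkt_add_right, brkt_smul_right, mul_add, mul_smul_comm, smul_add,
      Finset.sum_add_distrib, Finset.smul_sum, smul_comm (1/2 : ℚ)]
  have h1 := linear_part hE hJ hF hf
  have h2 := quadratic_part hE hJ hF hf
  rw [nuF0_eq hE hF, brkt_add_left, brkt_smul_left, brkt_smul_left]
  rw [brkt_smul_left] at h2
  simp only [LinearMap.sub_apply, LinearMap.comp_apply, LinearMap.smul_apply, lap_curvUp]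
  simp only [lap_eq_lap0_add (E := E) F, map_add, map_smul, hK]
  linear_combination (norm := module) (1/2 : ℚ) • h1 + (1/4 : ℚ) • h2

theorem lap0_sq_brkt (hE : S.AntiSymp E Einv) (hJ : S.JacobiId E) {p q : ZMod 2} {f g : A}
    (hf : f ∈ S.hom p) (hg : g ∈ S.hom q) :
    S.lap (fun _ => (0 : A)) E (S.lap (fun _ => (0 : A)) E (S.brkt E p f g))
      = S.brkt E p (S.lap (fun _ => (0 : A)) E (S.lap (fun _ => (0 : A)) E f)) g
        + S.brkt E p f (S.lap (fun _ => (0 : A)) E (S.lap (fun _ => (0 : A)) E g)) := by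
  have e : p + 1 + 1 = p := by clear * -; revert p; decide
  have h1 := lap0_brkt hE hJ (lap0_mem hE hf) hg
  rw [e] at h1
  rw [lap0_brkt hE hJ hf hg, map_add, map_smul, h1, lap0_brkt hE hJ hf (lap0_mem hE hg)]
  match_scalars <;> (clear * -; decide +kernel +revert)

end Calculus

/-- The first-order operator `Δ_F² - (1/2)Δ_{F,R}` differentiates the
antibracket. -/
theorem lapF_sq_minus_lapFR_differentiates_antibracket
    {ι : Type} [Fintype ι] [DecidableEq ι] {A : Type} [Ring A] [Algebra ℚ A]
    (S : SuperAlg ι A) (E Einv : ι → ι → A) (F : ι → A)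
    (hE : S.AntiSymp E Einv) (hF : ∀ a, F a ∈ S.hom (S.ε a))
    (hJac : S.JacobiId E) :
    ∀ (pf pg : ZMod 2) (f g : A), f ∈ S.hom pf → g ∈ S.hom pg →
      ((S.lap F E) ∘ₗ (S.lap F E)
          - (1/2 : ℚ) • S.lap F (fun a b => S.curvUp E F a b))
        (S.brkt E pf f g)
      = S.brkt E pf
          (((S.lap F E) ∘ₗ (S.lap F E)
            - (1/2 : ℚ) • S.lap F (fun a b => S.curvUp E F a b)) f) g
        + S.brkt E pf f
            (((S.lap F E) ∘ₗ (S.lap F E)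
              - (1/2 : ℚ) • S.lap F (fun a b => S.curvUp E F a b)) g) := by
  intro pf pg f g hf hg
  have hn := nuF0_mem hE hF
  have h1 := brkt_jacobi hE hJac hn hf hg
  have e : (1 : ZMod 2) + pf + 1 = pf := by clear * -; revert pf; decide
  have e' : sgn ((1 + 1) * (pf + 1)) = 1 := by clear * -; revert pf; decide +kernel
  rw [e, e', one_smul] at h1
  rw [lapF_sq_sub_eq hE hJac hF (brkt_mem hE hf hg), lapF_sq_sub_eq hE hJac hF hf,
    lapF_sq_sub_eq hE hJac hF hg, lap0_sq_brkt hE hJac hf hg, h1, brkt_add_left, brkt_add_right]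
  abel

end SuperAlg
end
end
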